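/- Let T > 0, let a : ℝ → ℝ be T-periodic and locally integrable satisfying condition (a*) with intervals I⁺_1, …, I⁺_m, and for μ > 0 set a_μ(t) = a⁺(t) − μ a⁻(t). Let g ∈ C¹([0,∞)) satisfy (g*) and (gs). Set J⁺_{i,ℓ} = I⁺_i + ℓT for i = 1, …, m and ℓ ∈ ℤ. Then there exist constants r, R with 0 < r < R and μ* > 0 such that, for every μ > μ*, every integer k ≥ 2, and every km-tuple S = (s_1, …, s_{km}) ∈ {0,1}^{km} with S ≠ (0, …, 0), there exists a positive kT-periodic solution u of u'' + a_μ(t) g(u) = 0 such that, for all i = 1, …, m and ℓ = 0, …, k−1 with j = i + ℓm: max over J⁺_{i,ℓ} of u is < r if s_j = 0, and r < max over J⁺_{i,ℓ} of u < R if s_j = 1. In particular, for all μ > μ* and all k ≥ 2, the equation u'' + a_μ(t) g(u) = 0 has at least 2^{km} − 1 distinct positive kT-periodic solutions. -/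

import Mathlib

open MeasureTheory Set Filter

/-- `u` is a solution of `u'' + F(t,u) = 0`: `u` is of class `C¹` and its derivative `u'`
is locally absolutely continuous (it is the integral of a locally integrable function),
with `u'' + F(t, u(t)) = 0` for a.e. `t`. -/
def IsSol (F : ℝ → ℝ → ℝ) (u : ℝ → ℝ) : Prop :=
  ∃ u' : ℝ → ℝ,
    (∀ t, HasDerivAt u (u' t) t) ∧
    MeasureTheory.LocallyIntegrable (fun s => F s (u s)) MeasureTheory.volume ∧
    ∀ t, u' t = u' 0 - ∫ s in (0:ℝ)..t, F s (u s)

/-- `q ≻ 0` on `I` : `q ≥ 0` a.e. on `I` and `q ≢ 0` on `I`. -/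
def PosOn (q : ℝ → ℝ) (I : Set ℝ) : Prop :=
  (∀ᵐ t ∂(MeasureTheory.volume.restrict I), 0 ≤ q t) ∧
  ¬ (∀ᵐ t ∂(MeasureTheory.volume.restrict I), q t = 0)

/-- Condition `(q*)`: `[0,T]` splits into `m` closed intervals where `q ≻ 0`
separated by `m` closed intervals where `q ≺ 0`. -/
def SignCond (q : ℝ → ℝ) (T : ℝ) (m : ℕ) : Prop :=
  ∃ σ : ℕ → ℝ, σ 0 = 0 ∧ σ (2*m) = T ∧ (∀ i < 2*m, σ i < σ (i+1)) ∧
    (∀ i < m, PosOn q (Set.Icc (σ (2*i)) (σ (2*i+1)))) ∧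
    (∀ i < m, PosOn (fun t => - q t) (Set.Icc (σ (2*i+1)) (σ (2*i+2))))

/-- A subharmonic solution of order `k`: `kT`-periodic but not `ℓT`-periodic
for `ℓ = 1, …, k-1`. -/
def IsSubharmonic (u : ℝ → ℝ) (T : ℝ) (k : ℕ) : Prop :=
  Function.Periodic u (k * T) ∧ ∀ ℓ : ℕ, 1 ≤ ℓ → ℓ < k → ¬ Function.Periodic u (ℓ * T)

/-- `u` and `v` belong to the same periodicity class. -/
def SameClass (u v : ℝ → ℝ) (T : ℝ) : Prop :=
  ∃ ℓ : ℤ, ∀ t, v t = u (t + ℓ * T)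


namespace PM
section comb
variable {ι : Type*} [DecidableEq ι]

def sh (q : ι → ℕ) (i : ι) : ι → ℕ := Function.update q i (q i + 1)

lemma sh_comm (q : ι → ℕ) (i j : ι) : sh (sh q i) j = sh (sh q j) i := by
  by_cases h : i = j
  · subst h; rfl
  · unfold sh
    rw [Function.update_of_ne (Ne.symm h), Function.update_of_ne h, Function.update_comm h]

lemma sh_ne (q : ι → ℕ) {i j : ι} (h : j ≠ i) : sh q i j = q j := by
  unfold sh; rw [Function.update_of_ne h]

def dd (ω : Finset ι → (ι → ℕ) → ZMod 2) (S : Finset ι) (q : ι → ℕ) : ZMod 2 :=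
  ∑ i ∈ S, (ω (S.erase i) (sh q i) + ω (S.erase i) q)

def cup (f : (ι → ℕ) → ZMod 2) (ω : Finset ι → (ι → ℕ) → ZMod 2) (S : Finset ι) (q : ι → ℕ) :
    ZMod 2 :=
  ∑ i ∈ S, (f (sh q i) + f q) * ω (S.erase i) (sh q i)

def om (f : ι → (ι → ℕ) → ZMod 2) : List ι → Finset ι → (ι → ℕ) → ZMod 2
  | [] => fun S _ => if S = ∅ then 1 else 0
  | i :: l => cup (f i) (om f l)

lemma two_self (x : ZMod 2) : x + x = 0 := CharTwo.add_self_eq_zero x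

lemma d_mul (f : (ι → ℕ) → ZMod 2) (ω : Finset ι → (ι → ℕ) → ZMod 2) (S : Finset ι) (q : ι → ℕ) :
    dd (fun S q => f q * ω S q) S q = cup f ω S q + f q * dd ω S q := by
  unfold dd cup
  rw [Finset.mul_sum, ← Finset.sum_add_distrib]
  refine Finset.sum_congr rfl fun i _ => ?_
  linear_combination - two_self (f q * ω (S.erase i) (sh q i))

lemma d_d (ω : Finset ι → (ι → ℕ) → ZMod 2) (S : Finset ι) (q : ι → ℕ) :
    dd (dd ω) S q = 0 := by
  unfold dd
  have : ∀ i ∈ S, (∑ j ∈ S.erase i, (ω ((S.erase i).erase j) (sh (sh q i) j) +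
      ω ((S.erase i).erase j) (sh q i)) + ∑ j ∈ S.erase i, (ω ((S.erase i).erase j) (sh q j) +
      ω ((S.erase i).erase j) q)) = ∑ j ∈ S.erase i, (ω ((S.erase i).erase j) (sh (sh q i) j) +
      ω ((S.erase i).erase j) (sh q i) + (ω ((S.erase i).erase j) (sh q j) +
      ω ((S.erase i).erase j) q)) := fun i _ => by rw [Finset.sum_add_distrib (g := fun j => _ + _)]
  rw [Finset.sum_congr rfl this, Finset.sum_sigma']
  refine Finset.sum_involution (fun x _ => ⟨x.2, x.1⟩) ?_ ?_ ?_ ?_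
  · rintro ⟨i, j⟩ h
    simp only
    rw [Finset.erase_right_comm (a := j) (b := i), sh_comm q j i]
    linear_combination two_self (ω ((S.erase i).erase j) (sh (sh q i) j)) +
      two_self (ω ((S.erase i).erase j) (sh q i)) + two_self (ω ((S.erase i).erase j) (sh q j)) +
      two_self (ω ((S.erase i).erase j) q)
  · rintro ⟨i, j⟩ h _ h2
    simp at h h2
    exact h.2.1 h2.1
  · rintro ⟨i, j⟩ h
    simp at h ⊢
    exact ⟨h.2.2, fun e => h.2.1 e.symm, h.1⟩
  · rintro ⟨i, j⟩ h; rfl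

lemma om_closed (f : ι → (ι → ℕ) → ZMod 2) (l : List ι) : dd (om f l) = 0 := by
  induction l with
  | nil =>
    funext S q
    simp only [dd, om, Pi.zero_apply]
    exact Finset.sum_eq_zero fun i _ => two_self _
  | cons i l ih =>
    have : om f (i :: l) = dd (fun S q => f i q * om f l S q) := by
      funext S q
      rw [d_mul, ih]; simp [om]
    rw [this]; funext S q; exact d_d _ _ _

lemma om_cons (f : ι → (ι → ℕ) → ZMod 2) (i : ι) (l : List ι) (S : Finset ι) (q : ι → ℕ) :
    om f (i :: l) S q = dd (fun S q => f i q * om f l S q) S q := by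
  rw [d_mul, om_closed]; simp [om]

/-- vanishing on faces -/
lemma om_face (f : ι → (ι → ℕ) → ZMod 2) (j : ι) (c : ℕ) (v : ZMod 2)
    (hf : ∀ q, q j = c → f j q = v) (l : List ι) (hj : j ∈ l) (S : Finset ι) (hS : j ∉ S)
    (q : ι → ℕ) (hq : q j = c) : om f l S q = 0 := by
  induction l generalizing S q with
  | nil => simp at hj
  | cons i l ih =>
    simp only [om, cup]
    refine Finset.sum_eq_zero fun k hk => ?_
    have hkj : j ≠ k := fun h => hS (h ▸ hk)
    rcases List.mem_cons.1 hj with h | h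
    · subst h
      rw [hf _ hq, hf _ (by rw [sh_ne _ hkj, hq]), two_self, zero_mul]
    · rw [ih h _ (fun h => hS (Finset.mem_of_mem_erase h)) _ (by rw [sh_ne _ hkj, hq]), mul_zero]

/-- nonvanishing implies label changes -/
lemma om_ne (f : ι → (ι → ℕ) → ZMod 2) (l : List ι) (S : Finset ι) (q : ι → ℕ)
    (h : om f l S q ≠ 0) (i : ι) (hi : i ∈ l) :
    ∃ r s : ι → ℕ, (∀ k, q k ≤ r k ∧ r k ≤ q k + if k ∈ S then 1 else 0) ∧
      (∀ k, q k ≤ s k ∧ s k ≤ q k + if k ∈ S then 1 else 0) ∧ f i r ≠ f i s := by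
  induction l generalizing S q with
  | nil => simp at hi
  | cons j l ih =>
    simp only [om, cup] at h
    obtain ⟨k, hk, hne⟩ := Finset.exists_ne_zero_of_sum_ne_zero h
    have h1 := left_ne_zero_of_mul hne
    have h2 := right_ne_zero_of_mul hne
    have hb : ∀ k', q k' ≤ sh q k k' ∧ sh q k k' ≤ q k' + if k' ∈ S then 1 else 0 := by
      intro k'
      by_cases hkk : k' = k
      · subst hkk; simp [sh, hk]
      · rw [sh_ne _ hkk]; simp
    rcases List.mem_cons.1 hi with h | h
    · subst h
      refine ⟨sh q k, q, hb, fun _ => by simp, fun e => h1 (by rw [e, two_self])⟩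
    · obtain ⟨r, s, hr, hs, hrs⟩ := ih _ _ h2 h
      have key : ∀ r : ι → ℕ, (∀ k', sh q k k' ≤ r k' ∧ r k' ≤ sh q k k' +
          if k' ∈ S.erase k then 1 else 0) →
          ∀ k', q k' ≤ r k' ∧ r k' ≤ q k' + if k' ∈ S then 1 else 0 := by
        intro r hr k'
        have := hr k'
        by_cases hkk : k' = k
        · subst hkk
          simp [sh, hk] at this ⊢; omega
        · rw [sh_ne _ hkk] at this
          simpa [hkk] using this
      exact ⟨r, s, key r hr, key s hs, hrs⟩

def bs (p : ℕ) (F : (ι → ℕ) → ZMod 2) : List ι → (ι → ℕ) → ZMod 2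
  | [] => F
  | j :: l => fun x => ∑ t ∈ Finset.range p, bs p F l (Function.update x j t)

lemma bs_perm (p : ℕ) (F : (ι → ℕ) → ZMod 2) {l l' : List ι} (h : l.Perm l') (hn : l.Nodup) :
    bs p F l = bs p F l' := by
  induction h with
  | nil => rfl
  | cons x _ ih => funext y; simp only [bs]; rw [ih hn.of_cons]
  | swap x y l =>
    funext z
    simp only [bs]
    rw [Finset.sum_comm]
    have : x ≠ y := by
      rintro rfl; simp at hn
    refine Finset.sum_congr rfl fun s _ => Finset.sum_congr rfl fun t _ => ?_
    rw [Function.update_comm this]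
  | trans h1 _ ih1 ih2 => rw [ih1 hn, ih2 (h1.nodup_iff.1 hn)]

lemma bs_add (p : ℕ) (F G : (ι → ℕ) → ZMod 2) (l : List ι) (x : ι → ℕ) :
    bs p (fun q => F q + G q) l x = bs p F l x + bs p G l x := by
  induction l generalizing x with
  | nil => rfl
  | cons j l ih => simp only [bs, ih, Finset.sum_add_distrib]

lemma bs_sum {κ : Type*} (p : ℕ) (s : Finset κ) (F : κ → (ι → ℕ) → ZMod 2) (l : List ι)
    (x : ι → ℕ) : bs p (fun q => ∑ k ∈ s, F k q) l x = ∑ k ∈ s, bs p (F k) l x := by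
  induction l generalizing x with
  | nil => rfl
  | cons j l ih =>
    simp only [bs, ih]; rw [Finset.sum_comm]

lemma bs_congr (p : ℕ) (F G : (ι → ℕ) → ZMod 2) (l : List ι) (j : ι) (hj : j ∉ l) (c : ℕ)
    (h : ∀ q, q j = c → F q = G q) (x : ι → ℕ) (hx : x j = c) : bs p F l x = bs p G l x := by
  induction l generalizing x with
  | nil => exact h x hx
  | cons k l ih =>
    simp only [bs]
    refine Finset.sum_congr rfl fun t _ => ih (fun h => hj (List.mem_cons_of_mem _ h)) _ ?_
    rw [Function.update_of_ne (fun h => hj (by simp [h]))]; exact hx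

lemma bs_zero (p : ℕ) (l : List ι) (x : ι → ℕ) : bs p (fun _ => 0) l x = 0 := by
  induction l generalizing x with
  | nil => rfl
  | cons j l ih => simp [bs, ih]

lemma bs_sh (p : ℕ) (F : (ι → ℕ) → ZMod 2) (l : List ι) (j : ι) (hj : j ∉ l) (x : ι → ℕ) :
    bs p (fun q => F (sh q j)) l x = bs p F l (sh x j) := by
  induction l generalizing x with
  | nil => rfl
  | cons k l ih =>
    have hk : j ≠ k := fun h => hj (by simp [h])
    simp only [bs]
    refine Finset.sum_congr rfl fun t _ => ?_
    rw [ih (fun h => hj (List.mem_cons_of_mem _ h))]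
    congr 1
    unfold sh
    rw [Function.update_of_ne hk, Function.update_comm hk]

lemma sum_tel (p : ℕ) (F : ℕ → ZMod 2) : ∑ t ∈ Finset.range p, (F (t+1) + F t) = F p + F 0 := by
  have := Finset.sum_range_sub F p
  simpa [CharTwo.sub_eq_add] using this

lemma bs_tel (p : ℕ) (F : (ι → ℕ) → ZMod 2) (l : List ι) (j : ι) (hj : j ∉ l) (x : ι → ℕ) :
    bs p (fun q => F (sh q j) + F q) (j :: l) x =
      bs p F l (Function.update x j p) + bs p F l (Function.update x j 0) := by
  simp only [bs]
  rw [← sum_tel p (fun t => bs p F l (Function.update x j t))]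
  refine Finset.sum_congr rfl fun t _ => ?_
  rw [bs_add, bs_sh _ _ _ _ hj]
  simp [sh]

lemma bs_om (p : ℕ) (f : ι → (ι → ℕ) → ZMod 2) (h0 : ∀ i q, q i = 0 → f i q = 0)
    (hp : ∀ i q, q i = p → f i q = 1) (l : List ι) (hl : l.Nodup) (x : ι → ℕ) :
    bs p (om f l l.toFinset) l x = 1 := by
  induction l generalizing x with
  | nil => simp [bs, om]
  | cons i l ih =>
    have hil : i ∉ l := (List.nodup_cons.1 hl).1
    have hln := (List.nodup_cons.1 hl).2
    set S := (i :: l).toFinset with hS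
    have e1 : om f (i :: l) S = fun q => ∑ j ∈ S,
        (f i (sh q j) * om f l (S.erase j) (sh q j) + f i q * om f l (S.erase j) q) := by
      funext q; rw [om_cons]; rfl
    rw [e1, bs_sum]
    rw [Finset.sum_eq_single i]
    · rw [bs_tel p (fun q => f i q * om f l (S.erase i) q) l i hil]
      have hSe : S.erase i = l.toFinset := by
        rw [hS, List.toFinset_cons, Finset.erase_insert (by simpa using hil)]
      rw [hSe]
      rw [bs_congr p _ (om f l l.toFinset) l i hil p
        (fun q hq => by rw [hp i q hq, one_mul]) _ (by simp), ih hln]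
      rw [bs_congr p _ (fun _ => 0) l i hil 0
        (fun q hq => by rw [h0 i q hq, zero_mul]) _ (by simp), bs_zero, add_zero]
    · intro j hj hji
      have hjl : j ∈ l := by
        rw [hS, List.mem_toFinset] at hj
        exact (List.mem_cons.1 hj).resolve_left hji
      have hperm : (i :: l).Perm (j :: (i :: l).erase j) := List.perm_cons_erase (by simp [hjl])
      rw [bs_perm p _ hperm hl]
      have hjn : j ∉ (i :: l).erase j := by
        have := hperm.nodup_iff.1 hl
        exact (List.nodup_cons.1 this).1
      rw [bs_tel p (fun q => f i q * om f l (S.erase j) q) _ j hjn]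
      rw [bs_congr p _ (fun _ => 0) _ j hjn p (fun q hq => by
        rw [om_face f j p 1 (hp j) l hjl _ (by simp) q hq, mul_zero]) _ (by simp), bs_zero]
      rw [bs_congr p _ (fun _ => 0) _ j hjn 0 (fun q hq => by
        rw [om_face f j 0 0 (h0 j) l hjl _ (by simp) q hq, mul_zero]) _ (by simp), bs_zero,
        add_zero]
    · intro h; exact absurd (by simp [hS]) h

lemma bs_ne (p : ℕ) (F : (ι → ℕ) → ZMod 2) (l : List ι) (x : ι → ℕ) (h : bs p F l x ≠ 0) :
    ∃ q, F q ≠ 0 ∧ (∀ i, i ∈ l → x i < p → q i < p) ∧ (∀ i, i ∉ l → q i = x i) ∧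
      (∀ i, i ∈ l → q i < p) := by
  induction l generalizing x with
  | nil => exact ⟨x, h, by simp, by simp, by simp⟩
  | cons j l ih =>
    simp only [bs] at h
    obtain ⟨t, ht, hne⟩ := Finset.exists_ne_zero_of_sum_ne_zero h
    obtain ⟨q, hq, _, h2, h3⟩ := ih _ hne
    have h4 : ∀ i, i ∈ j :: l → q i < p := by
      intro i hi
      by_cases hil : i ∈ l
      · exact h3 i hil
      · rw [h2 i hil]
        have : i = j := (List.mem_cons.1 hi).resolve_right hil
        subst this
        simpa using ht
    refine ⟨q, hq, fun i hi _ => h4 i hi, fun i hi => ?_, h4⟩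
    rw [h2 i (fun h => hi (List.mem_cons_of_mem _ h)), Function.update_of_ne (fun h => hi (by simp [h]))]

lemma kuhn [Fintype ι] (p : ℕ) (f : ι → (ι → ℕ) → ZMod 2) (h0 : ∀ i q, q i = 0 → f i q = 0)
    (hp : ∀ i q, q i = p → f i q = 1) :
    ∃ q : ι → ℕ, (∀ i, q i < p) ∧ ∀ i, ∃ r s : ι → ℕ, (∀ k, q k ≤ r k ∧ r k ≤ q k + 1) ∧
      (∀ k, q k ≤ s k ∧ s k ≤ q k + 1) ∧ f i r = 0 ∧ f i s = 1 := by
  have h := bs_om p f h0 hp Finset.univ.toList (Finset.nodup_toList _) (fun _ => 0)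
  have h' : bs p (om f Finset.univ.toList Finset.univ.toList.toFinset) Finset.univ.toList
    (fun _ => 0) ≠ 0 := by rw [h]; exact one_ne_zero
  obtain ⟨q, hq, -, -, hlt⟩ := bs_ne _ _ _ _ h'
  refine ⟨q, fun i => hlt i (by simp), fun i => ?_⟩
  obtain ⟨r, s, hr, hs, hrs⟩ := om_ne f _ _ q hq i (by simp)
  have hr' : ∀ k, q k ≤ r k ∧ r k ≤ q k + 1 := fun k => by have := hr k; simpa using this
  have hs' : ∀ k, q k ≤ s k ∧ s k ≤ q k + 1 := fun k => by have := hs k; simpa using this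
  have h2 : ∀ v : ZMod 2, v = 0 ∨ v = 1 := by decide
  rcases h2 (f i r) with h | h <;> rcases h2 (f i s) with h' | h'
  · exact absurd (h.trans h'.symm) hrs
  · exact ⟨r, s, hr', hs', h, h'⟩
  · exact ⟨s, r, hs', hr', h', h⟩
  · exact absurd (h.trans h'.symm) hrs

end comb

/-- Poincaré–Miranda. -/
theorem miranda {ι : Type*} [Fintype ι] (F : (ι → ℝ) → ι → ℝ) (hF : Continuous F)
    (h0 : ∀ x, (∀ i, 0 ≤ x i ∧ x i ≤ 1) → ∀ i, x i = 0 → F x i ≤ 0)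
    (h1 : ∀ x, (∀ i, 0 ≤ x i ∧ x i ≤ 1) → ∀ i, x i = 1 → 0 ≤ F x i) :
    ∃ x : ι → ℝ, (∀ i, 0 ≤ x i ∧ x i ≤ 1) ∧ F x = 0 := by
  classical
  have step : ∀ p : ℕ, ∃ q : ι → ℝ, (q ∈ Icc (0 : ι → ℝ) 1) ∧ ∀ i, ∃ r s : ι → ℝ,
      dist r q ≤ 1 / (p + 1 : ℝ) ∧ dist s q ≤ 1 / (p + 1 : ℝ) ∧ F r i ≤ 0 ∧ 0 ≤ F s i := by
    intro p
    have hp1 : (0 : ℝ) < p + 1 := by positivity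
    let sc : (ι → ℕ) → ι → ℝ := fun q i => (q i : ℝ) / (p + 1)
    let f : ι → (ι → ℕ) → ZMod 2 := fun i q =>
      if q i = 0 then 0 else if q i = p + 1 then 1 else if 0 < F (sc q) i then 1 else 0
    obtain ⟨q, hq, hqi⟩ := kuhn (p + 1) f (fun i q h => by simp [f, h])
      (fun i q h => by simp [f, h])
    have hsc : ∀ r : ι → ℕ, (∀ k, r k ≤ p + 1) → ∀ i, 0 ≤ sc r i ∧ sc r i ≤ 1 := by
      intro r hr i
      refine ⟨by simp only [sc]; positivity, ?_⟩
      simp only [sc]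
      rw [div_le_one hp1]
      exact_mod_cast hr i
    have hd : ∀ r : ι → ℕ, (∀ k, q k ≤ r k ∧ r k ≤ q k + 1) →
        dist (sc r) (sc q) ≤ 1 / (p + 1 : ℝ) := by
      intro r hr
      rw [dist_pi_le_iff (by positivity)]
      intro i
      simp only [sc]
      rw [Real.dist_eq, ← sub_div, abs_div, abs_of_pos hp1]
      gcongr
      have h1 : (q i : ℝ) ≤ r i := by exact_mod_cast (hr i).1
      have h2 : (r i : ℝ) ≤ q i + 1 := by exact_mod_cast (hr i).2
      rw [abs_le]; constructor <;> linarith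
    refine ⟨sc q, ⟨fun i => (hsc q (fun k => (hq k).le) i).1,
      fun i => (hsc q (fun k => (hq k).le) i).2⟩, fun i => ?_⟩
    obtain ⟨r, s, hr, hs, hr0, hs1⟩ := hqi i
    refine ⟨sc r, sc s, hd r hr, hd s hs, ?_, ?_⟩
    · by_cases h : r i = 0
      · exact h0 _ (hsc r fun k => by have := hr k; have := hq k; omega) i (by simp [sc, h])
      · by_cases h' : r i = p + 1
        · simp [f, h'] at hr0
        · simp [f, h, h'] at hr0
          exact hr0
    · by_cases h : s i = 0
      · simp [f, h] at hs1
      · by_cases h' : s i = p + 1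
        · refine h1 _ (hsc s fun k => by have := hs k; have := hq k; omega) i ?_
          simp only [sc, h']; push_cast; field_simp
        · simp [f, h, h'] at hs1
          exact hs1.le
  choose q hq r s hr hs hFr hFs using step
  obtain ⟨x, hx, φ, hφ, hlim⟩ := isCompact_Icc.tendsto_subseq hq
  refine ⟨x, fun i => ⟨hx.1 i, hx.2 i⟩, ?_⟩
  have hz : Tendsto (fun p : ℕ => 1 / ((p : ℝ) + 1)) atTop (nhds 0) :=
    tendsto_one_div_add_atTop_nhds_zero_nat
  have hz' := hz.comp hφ.tendsto_atTop
  have conv : ∀ t : ℕ → ι → ℝ, (∀ p, dist (t p) (q p) ≤ 1 / (p + 1 : ℝ)) →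
      Tendsto (fun n => t (φ n)) atTop (nhds x) := by
    intro t ht
    refine (tendsto_iff_of_dist ?_).1 hlim
    refine squeeze_zero (fun _ => dist_nonneg) (fun n => ?_) hz'
    rw [dist_comm]; exact ht (φ n)
  funext i
  have hc : Continuous fun x => F x i := (continuous_apply i).comp hF
  apply le_antisymm
  · exact le_of_tendsto ((hc.tendsto x).comp (conv (fun p => r p i) fun p => hr p i))
      (Eventually.of_forall fun n => hFr (φ n) i)
  · exact ge_of_tendsto ((hc.tendsto x).comp (conv (fun p => s p i) fun p => hs p i))
      (Eventually.of_forall fun n => hFs (φ n) i)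

end PM


theorem cover (N : ℕ) [NeZero N] (ε : ℝ) (hε : 0 < ε) (X Y : ℕ → ℝ → ℝ → ℝ)
    (hX : ∀ n, Continuous (fun p : ℝ × ℝ => X n p.1 p.2))
    (hY : ∀ n, Continuous (fun p : ℝ × ℝ => Y n p.1 p.2))
    (lo hi : ℕ → ℝ) (hlh : ∀ n, lo n ≤ hi n) (sg : ℕ → Bool)
    (pX : ∀ n, X (n + N) = X n) (pY : ∀ n, Y (n + N) = Y n)
    (plo : ∀ n, lo (n + N) = lo n) (phi : ∀ n, hi (n + N) = hi n)
    (hf1 : ∀ n, sg n = true → ∀ x, 0 ≤ x → x ≤ ε →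
      hi (n+1) ≤ Y n x (lo n) ∧ Y n x (hi n) ≤ lo (n+1))
    (hf0 : ∀ n, sg n = false → ∀ x, 0 ≤ x → x ≤ ε →
      Y n x (lo n) ≤ lo (n+1) ∧ hi (n+1) ≤ Y n x (hi n)) :
    ∃ x y : ℕ → ℝ, ∀ n, 0 ≤ x n ∧ x n ≤ ε ∧ lo n ≤ y n ∧ y n ≤ hi n ∧ x (n + N) = x n ∧
      y (n + N) = y n ∧ y (n+1) = Y n (x n) (y n) ∧ x (n+1) = max 0 (min ε (X n (x n) (y n))) := by
  let xv : (ZMod N × Bool → ℝ) → ZMod N → ℝ := fun z j => ε * z (j, false)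
  let yv : (ZMod N × Bool → ℝ) → ZMod N → ℝ := fun z j =>
    lo j.val + (hi j.val - lo j.val) * z (j, true)
  let cl : ℝ → ℝ := fun s => max 0 (min ε s)
  let F : (ZMod N × Bool → ℝ) → ZMod N × Bool → ℝ := fun z i =>
    if i.2 then (if sg i.1.val then -1 else 1) * (Y i.1.val (xv z i.1) (yv z i.1) - yv z (i.1+1))
    else xv z i.1 - cl (X (i.1-1).val (xv z (i.1-1)) (yv z (i.1-1)))
  have hxv : ∀ j, Continuous fun z => xv z j := fun j => by simp only [xv]; fun_prop
  have hyv : ∀ j, Continuous fun z => yv z j := fun j => by simp only [yv]; fun_prop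
  have hF : Continuous F := by
    refine continuous_pi ?_
    rintro ⟨j, b⟩
    cases b
    · simp only [F, cl]
      have := (hX (j-1).val).comp ((hxv (j-1)).prodMk (hyv (j-1)))
      have h1 := hxv j
      simp only [Bool.false_eq_true, if_false]
      exact h1.sub (continuous_const.max (continuous_const.min this))
    · simp only [F, if_true]
      have := (hY j.val).comp ((hxv j).prodMk (hyv j))
      exact continuous_const.mul (this.sub (hyv (j+1)))
  have hmod : ∀ {α : Type} (f : ℕ → α), (∀ n, f (n + N) = f n) → ∀ n : ℕ, f ((n : ZMod N)).val = f n := by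
    intro α f hf n
    rw [ZMod.val_natCast]
    exact Function.Periodic.map_mod_nat hf n
  have hsucc : ∀ j : ZMod N, j + 1 = ((j.val + 1 : ℕ) : ZMod N) := fun j => by
    push_cast; rw [ZMod.natCast_zmod_val]
  have hlo1 : ∀ j : ZMod N, lo (j + 1).val = lo (j.val + 1) := fun j => by
    rw [hsucc, hmod lo plo]
  have hhi1 : ∀ j : ZMod N, hi (j + 1).val = hi (j.val + 1) := fun j => by
    rw [hsucc, hmod hi phi]
  have hcube : ∀ z : ZMod N × Bool → ℝ, (∀ i, 0 ≤ z i ∧ z i ≤ 1) → ∀ j, 0 ≤ xv z j ∧ xv z j ≤ ε ∧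
      lo j.val ≤ yv z j ∧ yv z j ≤ hi j.val := by
    intro z hz j
    have h1 := hz (j, false)
    have h2 := hz (j, true)
    have h3 := hlh j.val
    refine ⟨mul_nonneg hε.le h1.1, ?_, ?_, ?_⟩ <;> simp only [xv, yv] <;> nlinarith
  obtain ⟨z, hz, hFz⟩ := PM.miranda F hF (by
      rintro z hz ⟨j, b⟩ h
      have hc := hcube z hz
      cases b
      · simp only [F, Bool.false_eq_true, if_false]
        have : xv z j = 0 := by simp [xv, h]
        rw [this]
        simp [cl]
      · simp only [F, if_true]
        have hy : yv z j = lo j.val := by simp [yv, h]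
        have h1 := hc (j+1)
        rw [hlo1, hhi1] at h1
        rw [hy]
        by_cases hs : sg j.val = true
        · have := hf1 _ hs _ (hc j).1 (hc j).2.1
          rw [if_pos hs]; linarith
        · have := hf0 _ (by simpa using hs) _ (hc j).1 (hc j).2.1
          rw [if_neg hs]; linarith) (by
      rintro z hz ⟨j, b⟩ h
      have hc := hcube z hz
      cases b
      · simp only [F, Bool.false_eq_true, if_false]
        have : xv z j = ε := by simp [xv, h]
        rw [this]
        have : cl (X (j-1).val (xv z (j-1)) (yv z (j-1))) ≤ ε := by
          simp only [cl]
          exact max_le hε.le (min_le_left _ _)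
        linarith
      · simp only [F, if_true]
        have hy : yv z j = hi j.val := by simp [yv, h]
        have h1 := hc (j+1)
        rw [hlo1, hhi1] at h1
        rw [hy]
        by_cases hs : sg j.val = true
        · have := hf1 _ hs _ (hc j).1 (hc j).2.1
          rw [if_pos hs]; linarith
        · have := hf0 _ (by simpa using hs) _ (hc j).1 (hc j).2.1
          rw [if_neg hs]; linarith)
  refine ⟨fun n => xv z n, fun n => yv z n, fun n => ?_⟩
  have hc := hcube z hz n
  rw [hmod lo plo, hmod hi phi] at hc
  have e1 := congrFun hFz (((n : ℕ) : ZMod N), true)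
  have e2 := congrFun hFz (((n : ℕ) : ZMod N) + 1, false)
  simp only [F, if_true, Bool.false_eq_true, if_false, Pi.zero_apply, add_sub_cancel_right] at e1 e2
  rw [hmod Y pY] at e1
  rw [hmod X pX] at e2
  refine ⟨hc.1, hc.2.1, hc.2.2.1, hc.2.2.2, by simp, by simp, ?_, ?_⟩
  · push_cast
    have : (if sg ((n : ZMod N)).val = true then (-1 : ℝ) else 1) ≠ 0 := by split_ifs <;> norm_num
    have := (mul_eq_zero.1 e1).resolve_left this
    linarith
  · push_cast
    simp only [cl] at e2
    linarith


namespace ODE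

structure Sol (b h u w : ℝ → ℝ) : Prop where
  der : ∀ t, HasDerivAt u (w t) t
  eq : ∀ t₁ t₂, w t₂ = w t₁ - ∫ s in t₁..t₂, b s * h (u s)

lemma fwd_bound (c : ℝ → ℝ) (hc : ∀ p q, IntervalIntegrable c volume p q) (h0 : ∀ s, 0 ≤ c s)
    (T : ℝ) (hT : 0 < T) (A : ℝ) (hA : 0 ≤ A) (hper : ∀ t, ∫ s in t..t + T, c s ≤ A) (l : ℝ)
    (hl0 : 0 ≤ l) (hl : 2 ≤ Real.exp (l * T)) (t : ℝ) (ht : 0 ≤ t) :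
    ∫ s in (0:ℝ)..t, c s * Real.exp (l * s) ≤ 2 * A * Real.exp (l * t) := by
  have hi : ∀ p q, IntervalIntegrable (fun s => c s * Real.exp (l * s)) volume p q := fun p q =>
    (hc p q).mul_continuousOn (by fun_prop)
  have piece : ∀ p t, p ≤ t → t ≤ p + T → ∫ s in p..t, c s * Real.exp (l * s) ≤ A * Real.exp (l * t) := by
    intro p t hpt htp
    calc ∫ s in p..t, c s * Real.exp (l * s) ≤ ∫ s in p..t, c s * Real.exp (l * t) := by
          refine intervalIntegral.integral_mono_on hpt (hi p t) ((hc p t).mul_const _) fun s hs => ?_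
          have := h0 s
          gcongr
          exact hs.2
      _ = (∫ s in p..t, c s) * Real.exp (l * t) := by rw [intervalIntegral.integral_mul_const]
      _ ≤ A * Real.exp (l * t) := by
          gcongr
          refine le_trans ?_ (hper p)
          exact intervalIntegral.integral_mono_interval le_rfl hpt htp
            (Eventually.of_forall fun s => h0 s) (hc _ _)
  have main : ∀ n : ℕ, ∀ t, 0 ≤ t → t ≤ n * T →
      ∫ s in (0:ℝ)..t, c s * Real.exp (l * s) ≤ 2 * A * Real.exp (l * t) := by
    intro n
    induction n with
    | zero =>
      intro t h1 h2
      have : t = 0 := le_antisymm (by simpa using h2) h1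
      subst this
      simp; exact hA
    | succ n ih =>
      intro t h1 h2
      push_cast at h2
      by_cases h3 : t ≤ T
      · have := piece 0 t h1 (by linarith)
        have : 0 ≤ A * Real.exp (l * t) := by positivity
        linarith
      · push Not at h3
        have e1 := ih (t - T) (by linarith) (by linarith)
        have e2 := piece (t - T) t (by linarith) (by linarith)
        have e3 : Real.exp (l * t) = Real.exp (l * (t - T)) * Real.exp (l * T) := by
          rw [← Real.exp_add]; ring_nf
        rw [← intervalIntegral.integral_add_adjacent_intervals (hi 0 (t - T)) (hi (t - T) t)]
        have e4 : 2 * Real.exp (l * (t - T)) ≤ Real.exp (l * t) := by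
          rw [e3]; nlinarith [Real.exp_pos (l * (t - T))]
        nlinarith
  obtain ⟨n, hn⟩ := exists_nat_ge (t / T)
  exact main n t ht (by rwa [div_le_iff₀ hT] at hn)

lemma two_bound (c : ℝ → ℝ) (hc : ∀ p q, IntervalIntegrable c volume p q) (h0 : ∀ s, 0 ≤ c s)
    (T : ℝ) (hT : 0 < T) (A : ℝ) (hA : 0 ≤ A) (hper : ∀ t, ∫ s in t..t + T, c s ≤ A) (l : ℝ)
    (hl0 : 0 ≤ l) (hl : 2 ≤ Real.exp (l * T)) (t : ℝ) :
    |∫ s in (0:ℝ)..t, c s * Real.exp (l * |s|)| ≤ 2 * A * Real.exp (l * |t|) := by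
  rcases le_total 0 t with ht | ht
  · have e : ∫ s in (0:ℝ)..t, c s * Real.exp (l * |s|) = ∫ s in (0:ℝ)..t, c s * Real.exp (l * s) := by
      refine intervalIntegral.integral_congr fun s hs => ?_
      rw [uIcc_of_le ht] at hs
      simp only [abs_of_nonneg hs.1]
    rw [e, abs_of_nonneg ht, abs_of_nonneg]
    · exact fwd_bound c hc h0 T hT A hA hper l hl0 hl t ht
    · exact intervalIntegral.integral_nonneg ht fun s _ => mul_nonneg (h0 s) (Real.exp_pos _).le
  · have e : ∫ s in (0:ℝ)..t, c s * Real.exp (l * |s|) =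
        -∫ s in (0:ℝ)..(-t), c (-s) * Real.exp (l * s) := by
      rw [intervalIntegral.integral_symm, neg_inj]
      have := intervalIntegral.integral_comp_neg (a := 0) (b := -t) (fun s => c s * Real.exp (l * |s|))
      simp only [neg_neg, neg_zero] at this
      rw [← this]
      refine intervalIntegral.integral_congr fun s hs => ?_
      rw [uIcc_of_le (by linarith)] at hs
      simp only [abs_neg, abs_of_nonneg hs.1]
    rw [e, abs_neg, abs_of_nonpos ht, abs_of_nonneg]
    · refine fwd_bound (fun s => c (-s)) (fun p q => ?_) (fun s => h0 _) T hT A hA (fun t => ?_) l hl0 hl _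
        (by linarith)
      · have := (hc (-p) (-q)).comp_sub_left 0
        simpa using this
      · rw [intervalIntegral.integral_comp_neg]
        have := hper (-(t + T))
        simpa using this
    · exact intervalIntegral.integral_nonneg (by linarith)
        fun s _ => mul_nonneg (h0 _) (Real.exp_pos _).le

lemma exp_bound (l : ℝ) (hl : 0 < l) (t : ℝ) :
    |∫ s in (0:ℝ)..t, Real.exp (l * |s|)| ≤ Real.exp (l * |t|) / l := by
  have pos : ∀ t : ℝ, 0 ≤ t → ∫ s in (0:ℝ)..t, Real.exp (l * |s|) ≤ Real.exp (l * t) / l := by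
    intro t ht
    have e : ∫ s in (0:ℝ)..t, Real.exp (l * |s|) = ∫ s in (0:ℝ)..t, Real.exp (l * s) := by
      refine intervalIntegral.integral_congr fun s hs => ?_
      rw [uIcc_of_le ht] at hs
      simp only [abs_of_nonneg hs.1]
    rw [e, intervalIntegral.integral_comp_mul_left (fun s => Real.exp s) hl.ne', integral_exp]
    simp
    rw [div_eq_inv_mul]
    gcongr
    linarith
  rcases le_total 0 t with ht | ht
  · rw [abs_of_nonneg ht, abs_of_nonneg (intervalIntegral.integral_nonneg ht fun s _ => (Real.exp_pos _).le)]
    exact pos t ht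
  · have := intervalIntegral.integral_comp_neg (a := 0) (b := -t) (fun s => Real.exp (l * |s|))
    simp only [neg_neg, neg_zero, abs_neg] at this
    rw [intervalIntegral.integral_symm, abs_neg, ← this, abs_of_nonpos ht,
      abs_of_nonneg (intervalIntegral.integral_nonneg (by linarith) fun s _ => (Real.exp_pos _).le)]
    exact pos _ (by linarith)

lemma exists_sol0 (b h : ℝ → ℝ) (hb : ∀ p q, IntervalIntegrable b volume p q) (T : ℝ) (hT : 0 < T)
    (hper : Function.Periodic b T) (K : ℝ) (hK : 0 ≤ K) (hh : ∀ s t, |h s - h t| ≤ K * |s - t|)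
    (h00 : h 0 = 0) (x y : ℝ) : ∃ u w, Sol b h u w ∧ u 0 = x ∧ w 0 = y := by
  have hhc : Continuous h := by
    have : LipschitzWith K.toNNReal h := LipschitzWith.of_dist_le_mul fun s t => by
      rw [Real.dist_eq, Real.dist_eq, Real.coe_toNNReal K hK]; exact hh s t
    exact this.continuous
  set A : ℝ := ∫ s in (0:ℝ)..0 + T, |b s| with hA
  have hA0 : 0 ≤ A := intervalIntegral.integral_nonneg (by linarith) fun s _ => abs_nonneg _
  have hpA : ∀ t, ∫ s in t..t + T, |b s| ≤ A := fun t => by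
    rw [hA]
    refine le_of_eq (Function.Periodic.intervalIntegral_add_eq (f := fun s => |b s|) (fun s => ?_) t 0)
    simp only [hper s]
  set l : ℝ := 1 + 1 / T + 4 * A * K with hl
  have hl1 : 1 ≤ l := by
    have : 0 ≤ 1 / T := by positivity
    have : 0 ≤ 4 * A * K := by positivity
    linarith
  have hl0 : 0 < l := by linarith
  have hlT : 2 ≤ Real.exp (l * T) := by
    have h1 : 1 ≤ l * T := by
      have : 1 / T * T = 1 := by field_simp
      have : 0 ≤ 4 * A * K := by positivity
      nlinarith
    have := Real.add_one_le_exp (l * T)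
    linarith
  have hl4 : 4 * A * K ≤ l := by
    have : 0 ≤ 1 / T := by positivity
    linarith
  have B1 := two_bound (fun s => |b s|) (fun p q => (hb p q).abs) (fun s => abs_nonneg _) T hT A hA0 hpA l
    hl0.le hlT
  have B2 := exp_bound l hl0
  let E : ℝ → ℝ := fun t => Real.exp (l * |t|)
  have hE : Continuous E := by fun_prop
  have hEp : ∀ t, 0 < E t := fun t => Real.exp_pos _
  -- estimates
  have est1 : ∀ (f : ℝ → ℝ) (c : ℝ), 0 ≤ c → (∀ s, |f s| ≤ |b s| * (c * E s)) →
      ∀ t, |∫ s in (0:ℝ)..t, f s| ≤ 2 * A * c * E t := by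
    intro f c hc hf t
    have := intervalIntegral.norm_integral_le_abs_of_norm_le (a := 0) (b := t) (f := f)
      (g := fun s => c * (|b s| * E s)) (μ := volume)
      (Eventually.of_forall fun s => by rw [Real.norm_eq_abs]; linarith [hf s])
      (((hb 0 t).abs.mul_continuousOn hE.continuousOn).const_mul c)
    rw [Real.norm_eq_abs, intervalIntegral.integral_const_mul, abs_mul, abs_of_nonneg hc] at this
    have h2 := mul_le_mul_of_nonneg_left (B1 t) hc
    refine this.trans (h2.trans (le_of_eq ?_))
    simp only [E]; ring
  have est2 : ∀ (f : ℝ → ℝ) (c : ℝ), 0 ≤ c → (∀ s, |f s| ≤ c * E s) →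
      ∀ t, |∫ s in (0:ℝ)..t, f s| ≤ c / l * E t := by
    intro f c hc hf t
    have := intervalIntegral.norm_integral_le_abs_of_norm_le (a := 0) (b := t) (f := f)
      (g := fun s => c * E s) (μ := volume)
      (Eventually.of_forall fun s => by rw [Real.norm_eq_abs]; linarith [hf s])
      ((hE.intervalIntegrable 0 t).const_mul c)
    rw [Real.norm_eq_abs, intervalIntegral.integral_const_mul, abs_mul, abs_of_nonneg hc] at this
    have h2 := mul_le_mul_of_nonneg_left (B2 t) hc
    refine this.trans (h2.trans (le_of_eq ?_))
    simp only [E]; ring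
  let uu : BoundedContinuousFunction ℝ ℝ → ℝ → ℝ := fun v t => E t * v t
  let ww : BoundedContinuousFunction ℝ ℝ → ℝ → ℝ := fun v t => y - ∫ s in (0:ℝ)..t, b s * h (uu v s)
  let UU : BoundedContinuousFunction ℝ ℝ → ℝ → ℝ := fun v t => x + ∫ s in (0:ℝ)..t, ww v s
  have huu : ∀ v, Continuous (uu v) := fun v => hE.mul v.continuous
  have hbi : ∀ v p q, IntervalIntegrable (fun s => b s * h (uu v s)) volume p q := fun v p q =>
    (hb p q).mul_continuousOn (hhc.comp (huu v)).continuousOn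
  have hww : ∀ v, Continuous (ww v) := fun v =>
    continuous_const.sub (intervalIntegral.continuous_primitive (hbi v) 0)
  have hUU : ∀ v, Continuous (UU v) := fun v =>
    continuous_const.add (intervalIntegral.continuous_primitive (fun p q => (hww v).intervalIntegrable p q) 0)
  have hwd : ∀ v v' : BoundedContinuousFunction ℝ ℝ, ∀ c, 0 ≤ c → (∀ s, |v s - v' s| ≤ c) → ∀ t,
      |ww v t - ww v' t| ≤ 2 * A * (K * c) * E t := by
    intro v v' c hc hv t
    have : ww v t - ww v' t = ∫ s in (0:ℝ)..t, (b s * h (uu v' s) - b s * h (uu v s)) := by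
      rw [intervalIntegral.integral_sub (hbi _ _ _) (hbi _ _ _)]; simp only [ww]; ring
    rw [this]
    refine est1 _ (K * c) (by positivity) (fun s => ?_) t
    rw [← mul_sub, abs_mul]
    refine mul_le_mul_of_nonneg_left ?_ (abs_nonneg _)
    refine (hh _ _).trans ?_
    simp only [uu]
    rw [← mul_sub, abs_mul, abs_of_pos (hEp s), abs_sub_comm]
    have := mul_le_mul_of_nonneg_left (hv s) (mul_nonneg hK (hEp s).le)
    linarith
  have hUd : ∀ v v' : BoundedContinuousFunction ℝ ℝ, ∀ c, 0 ≤ c → (∀ s, |v s - v' s| ≤ c) → ∀ t,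
      |UU v t - UU v' t| ≤ (1 / 2) * c * E t := by
    intro v v' c hc hv t
    have : UU v t - UU v' t = ∫ s in (0:ℝ)..t, (ww v s - ww v' s) := by
      rw [intervalIntegral.integral_sub ((hww v).intervalIntegrable _ _) ((hww v').intervalIntegrable _ _)]
      simp only [UU]; ring
    rw [this]
    refine (est2 _ (2 * A * (K * c)) (by positivity) (hwd v v' c hc hv) t).trans ?_
    refine mul_le_mul_of_nonneg_right ?_ (hEp t).le
    rw [div_le_iff₀ hl0]
    nlinarith
  have hU0 : ∀ t, |UU 0 t| ≤ (|x| + |y|) * E t := by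
    intro t
    have e : UU 0 t = x + t * y := by simp [UU, ww, uu, h00]
    rw [e]
    have h1 : 1 ≤ E t := Real.one_le_exp (by positivity)
    have h2 : |t| ≤ E t := by
      have h3 := Real.add_one_le_exp (l * |t|)
      have : |t| ≤ l * |t| := le_mul_of_one_le_left (abs_nonneg t) hl1
      simp only [E]; linarith
    have h4 := abs_add_le x (t * y)
    rw [abs_mul] at h4
    nlinarith [abs_nonneg x, abs_nonneg y, mul_le_mul_of_nonneg_right h2 (abs_nonneg y),
      mul_le_mul_of_nonneg_left h1 (abs_nonneg x)]
  have hUb : ∀ v t, |(E t)⁻¹ * UU v t| ≤ (1 / 2) * ‖v‖ + (|x| + |y|) := by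
    intro v t
    have h1 := hUd v 0 ‖v‖ (norm_nonneg _) (fun s => by simpa using v.norm_coe_le_norm s) t
    have h2 := hU0 t
    have h3 : |UU v t| ≤ ((1 / 2) * ‖v‖ + (|x| + |y|)) * E t := by
      have := abs_sub_abs_le_abs_sub (UU v t) (UU 0 t)
      linarith
    rw [abs_mul, abs_of_pos (inv_pos.2 (hEp t)), inv_mul_le_iff₀ (hEp t)]
    linarith
  let G : BoundedContinuousFunction ℝ ℝ → BoundedContinuousFunction ℝ ℝ := fun v =>
    BoundedContinuousFunction.ofNormedAddCommGroup (fun t => (E t)⁻¹ * UU v t)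
      ((hE.inv₀ fun t => (hEp t).ne').mul (hUU v)) _ (fun t => by
        rw [Real.norm_eq_abs]; exact hUb v t)
  have hG : ContractingWith (1 / 2) G := by
    refine ⟨by rw [← NNReal.coe_lt_coe]; norm_num, LipschitzWith.of_dist_le_mul fun v v' => ?_⟩
    rw [BoundedContinuousFunction.dist_le (by positivity)]
    intro t
    have := hUd v v' (dist v v') dist_nonneg (fun s => by
      rw [← Real.dist_eq]; exact BoundedContinuousFunction.dist_coe_le_dist s) t
    simp only [G, BoundedContinuousFunction.coe_ofNormedAddCommGroup]
    rw [Real.dist_eq, ← mul_sub, abs_mul, abs_of_pos (inv_pos.2 (hEp t)), inv_mul_le_iff₀ (hEp t)]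
    push_cast
    linarith
  obtain ⟨v, hv⟩ : ∃ v, G v = v := ⟨_, hG.fixedPoint_isFixedPt⟩
  have huU : uu v = UU v := by
    funext t
    have := congrArg (fun f => f t) hv
    simp only [G, BoundedContinuousFunction.coe_ofNormedAddCommGroup] at this
    simp only [uu]
    rw [← this, mul_inv_cancel_left₀ (hEp t).ne']
  refine ⟨UU v, ww v, ⟨fun t => ?_, fun t₁ t₂ => ?_⟩, by simp [UU], by simp [ww]⟩
  · exact (intervalIntegral.integral_hasDerivAt_right ((hww v).intervalIntegrable 0 t)
      ((hww v).stronglyMeasurableAtFilter _ _) (hww v).continuousAt).const_add x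
  · rw [← huU]
    simp only [ww]
    rw [← intervalIntegral.integral_add_adjacent_intervals (hbi v 0 t₁) (hbi v t₁ t₂)]
    ring

lemma Sol.shift {b h u w : ℝ → ℝ} (hs : Sol b h u w) (c : ℝ) :
    Sol (fun t => b (t + c)) h (fun t => u (t + c)) (fun t => w (t + c)) := by
  refine ⟨fun t => (hs.der (t + c)).comp_add_const t c, fun t₁ t₂ => ?_⟩
  rw [hs.eq (t₁ + c) (t₂ + c), intervalIntegral.integral_comp_add_right (fun s => b s * h (u s))]

lemma Sol.neg {b h u w : ℝ → ℝ} (hs : Sol b h u w) :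
    Sol (fun t => b (-t)) h (fun t => u (-t)) (fun t => -w (-t)) := by
  refine ⟨fun t => ?_, fun t₁ t₂ => ?_⟩
  · have := (hs.der (-t)).scomp t (hasDerivAt_neg t)
    simpa [Function.comp_def] using this
  · rw [hs.eq (-t₁) (-t₂), intervalIntegral.integral_comp_neg (fun s => b s * h (u s)),
      intervalIntegral.integral_symm]
    ring

lemma exists_sol (b h : ℝ → ℝ) (hb : ∀ p q, IntervalIntegrable b volume p q) (T : ℝ) (hT : 0 < T)
    (hper : Function.Periodic b T) (K : ℝ) (hK : 0 ≤ K) (hh : ∀ s t, |h s - h t| ≤ K * |s - t|)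
    (h00 : h 0 = 0) (t₀ x y : ℝ) : ∃ u w, Sol b h u w ∧ u t₀ = x ∧ w t₀ = y := by
  obtain ⟨u, w, hs, hu, hw⟩ := exists_sol0 (fun t => b (t + t₀)) h
    (fun p q => by
      have := (hb (p + t₀) (q + t₀)).comp_add_right t₀
      simpa using this) T hT
    (fun t => by simp only; rw [show t + T + t₀ = t + t₀ + T by ring]; exact hper _) K hK hh h00 x y
  have := hs.shift (-t₀)
  simp only [neg_add_cancel_right] at this
  exact ⟨_, _, this, by simpa using hu, by simpa using hw⟩

lemma stab (b h : ℝ → ℝ) (hb : ∀ p q, IntervalIntegrable b volume p q) (K : ℝ) (hK : 0 ≤ K)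
    (hh : ∀ s t, |h s - h t| ≤ K * |s - t|) (t₀ W : ℝ) (hW : 0 ≤ W) :
    ∃ C, 0 ≤ C ∧ ∀ u w u' w' : ℝ → ℝ, (∀ t, HasDerivAt u (w t) t) →
      (∀ t, HasDerivAt u' (w' t) t) →
      (∀ t ∈ Icc t₀ (t₀ + W), w t = w t₀ - ∫ s in t₀..t, b s * h (u s)) →
      (∀ t ∈ Icc t₀ (t₀ + W), w' t = w' t₀ - ∫ s in t₀..t, b s * h (u' s)) →
      ∀ t ∈ Icc t₀ (t₀ + W), |u t - u' t| ≤ C * (|u t₀ - u' t₀| + |w t₀ - w' t₀|) ∧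
        |w t - w' t| ≤ C * (|u t₀ - u' t₀| + |w t₀ - w' t₀|) := by
  have hhc : Continuous h := by
    have : LipschitzWith K.toNNReal h := LipschitzWith.of_dist_le_mul fun s t => by
      rw [Real.dist_eq, Real.dist_eq, Real.coe_toNNReal K hK]; exact hh s t
    exact this.continuous
  set A : ℝ := ∫ s in t₀..t₀ + W, |b s| with hA
  have hA0 : 0 ≤ A := intervalIntegral.integral_nonneg (by linarith) fun s _ => abs_nonneg _
  set l : ℝ := 1 + 2 * A * K with hl
  have hl0 : 0 < l := by positivity
  let E : ℝ → ℝ := fun t => Real.exp (l * (t - t₀))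
  have hE : Continuous E := by fun_prop
  have hEp : ∀ t, 0 < E t := fun t => Real.exp_pos _
  have hEm : ∀ s t, s ≤ t → E s ≤ E t := fun s t hst => by
    simp only [E]; gcongr
  have hE1 : ∀ t, t₀ ≤ t → 1 ≤ E t := fun t ht => by
    have := hEm t₀ t ht; simpa [E] using this
  refine ⟨(1 + K * A) * (2 * (1 + W)) * E (t₀ + W), by positivity, ?_⟩
  intro u w u' w' du du' hw hw' 
  have cu : Continuous u := continuous_iff_continuousAt.2 fun t => (du t).continuousAt
  have cu' : Continuous u' := continuous_iff_continuousAt.2 fun t => (du' t).continuousAt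
  set dx := |u t₀ - u' t₀|
  set dy := |w t₀ - w' t₀|
  have hdx : 0 ≤ dx := abs_nonneg _
  have hdy : 0 ≤ dy := abs_nonneg _
  obtain ⟨tm, htm, hmax⟩ := isCompact_Icc.exists_isMaxOn (nonempty_Icc.2 (by linarith : t₀ ≤ t₀ + W))
    (f := fun t => (E t)⁻¹ * |u t - u' t|)
    (((hE.inv₀ fun t => (hEp t).ne').mul (cu.sub cu').abs).continuousOn)
  set M := (E tm)⁻¹ * |u tm - u' tm| with hM
  have hM0 : 0 ≤ M := mul_nonneg (inv_pos.2 (hEp _)).le (abs_nonneg _)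
  have hMu : ∀ t ∈ Icc t₀ (t₀ + W), |u t - u' t| ≤ M * E t := by
    intro t ht
    have : (E t)⁻¹ * |u t - u' t| ≤ M := hmax ht
    rwa [inv_mul_le_iff₀ (hEp t), mul_comm] at this
  have hMw : ∀ t ∈ Icc t₀ (t₀ + W), |w t - w' t| ≤ dy + K * A * M * E t := by
    intro t ht
    have i1 : ∀ v : ℝ → ℝ, Continuous v → IntervalIntegrable (fun s => b s * h (v s)) volume t₀ t :=
      fun v hv => (hb _ _).mul_continuousOn (hhc.comp hv).continuousOn
    have e : w t - w' t = (w t₀ - w' t₀) - ∫ s in t₀..t, (b s * h (u s) - b s * h (u' s)) := by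
      rw [hw t ht, hw' t ht, intervalIntegral.integral_sub (i1 u cu) (i1 u' cu')]; ring
    have e2 : |∫ s in t₀..t, (b s * h (u s) - b s * h (u' s))| ≤ K * A * M * E t := by
      have h1 : |∫ s in t₀..t, (b s * h (u s) - b s * h (u' s))| ≤ ∫ s in t₀..t, |b s| * (K * (M * E t)) := by
        rw [← Real.norm_eq_abs]
        refine intervalIntegral.norm_integral_le_of_norm_le ht.1 (Eventually.of_forall fun s hs => ?_)
          ((hb _ _).abs.mul_const _)
        rw [← mul_sub, norm_mul, Real.norm_eq_abs, Real.norm_eq_abs]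
        refine mul_le_mul_of_nonneg_left ((hh _ _).trans ?_) (abs_nonneg _)
        refine mul_le_mul_of_nonneg_left ?_ hK
        refine (hMu s ⟨hs.1.le, hs.2.trans ht.2⟩).trans ?_
        exact mul_le_mul_of_nonneg_left (hEm _ _ hs.2) hM0
      rw [intervalIntegral.integral_mul_const] at h1
      have h2 : ∫ s in t₀..t, |b s| ≤ A := intervalIntegral.integral_mono_interval le_rfl ht.1 ht.2
            (Eventually.of_forall fun s => abs_nonneg _) (hb _ _).abs
      have h3 : 0 ≤ K * (M * E t) := by have := hEp t; positivity
      nlinarith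
    rw [e]
    refine (abs_sub _ _).trans ?_
    linarith
  have hMU : ∀ t ∈ Icc t₀ (t₀ + W), |u t - u' t| ≤ dx + dy * (t - t₀) + K * A * M * (E t / l) := by
    intro t ht
    have := image_norm_le_of_norm_deriv_right_le_deriv_boundary (f := fun t => u t - u' t)
      (f' := fun t => w t - w' t) (a := t₀) (b := t₀ + W) (cu.sub cu').continuousOn
      (fun s _ => ((du s).sub (du' s)).hasDerivWithinAt)
      (B := fun t => dx + dy * (t - t₀) + K * A * M * (E t / l))
      (B' := fun t => dy + K * A * M * E t) (by
        rw [Real.norm_eq_abs]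
        have : 0 ≤ K * A * M * (E t₀ / l) := by have := hEp t₀; positivity
        simp only [sub_self, mul_zero, add_zero]
        linarith) (fun s => by
        have h1 : HasDerivAt E (E s * (l * 1)) s := by
          have := (((hasDerivAt_id s).sub_const t₀).const_mul l).exp
          simpa [E] using this
        have h2 := (((hasDerivAt_id s).sub_const t₀).const_mul dy).const_add dx |>.add
          ((h1.div_const l).const_mul (K * A * M))
        have h3 : dy * 1 + K * A * M * (E s * (l * 1) / l) = dy + K * A * M * E s := by
          have : E s * (l * 1) / l = E s := by field_simp
          rw [this, mul_one]
        rw [← h3]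
        exact h2) (fun s hs => by
        rw [Real.norm_eq_abs]; exact hMw s ⟨hs.1, hs.2.le⟩) ht
    simpa [Real.norm_eq_abs] using this
  have hMb : M ≤ 2 * (1 + W) * (dx + dy) := by
    have h1 := hMU tm htm
    have h2 : |u tm - u' tm| = M * E tm := by rw [hM]; field_simp [(hEp tm).ne']
    rw [h2] at h1
    have h3 : K * A * M * (E tm / l) ≤ M * E tm / 2 := by
      have : K * A / l ≤ 1 / 2 := by
        rw [div_le_iff₀ hl0]; nlinarith
      have h4 : 0 ≤ M * E tm := mul_nonneg hM0 (hEp _).le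
      calc K * A * M * (E tm / l) = (K * A / l) * (M * E tm) := by ring
        _ ≤ 1 / 2 * (M * E tm) := mul_le_mul_of_nonneg_right this h4
        _ = _ := by ring
    have h5 := hE1 tm htm.1
    have h6 : tm - t₀ ≤ W := by linarith [htm.2]
    have h7 : M ≤ M * E tm := le_mul_of_one_le_right hM0 h5
    have h8 : dy * (tm - t₀) ≤ dy * W := mul_le_mul_of_nonneg_left h6 hdy
    nlinarith [mul_nonneg hdx hW]
  intro t ht
  have hEt : E t ≤ E (t₀ + W) := hEm _ _ ht.2
  have hEW := hE1 (t₀ + W) (by linarith)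
  have hKA : 0 ≤ K * A := mul_nonneg hK hA0
  have hME : M * E t ≤ 2 * (1 + W) * (dx + dy) * E (t₀ + W) :=
    mul_le_mul hMb hEt (hEp _).le (by positivity)
  have hP : dx + dy ≤ 2 * (1 + W) * (dx + dy) * E (t₀ + W) := by
    have h1 : dx + dy ≤ 2 * (1 + W) * (dx + dy) := by nlinarith
    have h2 : 2 * (1 + W) * (dx + dy) ≤ 2 * (1 + W) * (dx + dy) * E (t₀ + W) :=
      le_mul_of_one_le_right (by positivity) hEW
    linarith
  constructor
  · refine (hMu t ht).trans (hME.trans ?_)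
    have : 0 ≤ K * A * (2 * (1 + W) * (dx + dy) * E (t₀ + W)) := by positivity
    linarith
  · refine (hMw t ht).trans ?_
    have := mul_le_mul_of_nonneg_left hME hKA
    linarith

/-- Forward uniqueness on an interval. -/
lemma uniq (b h : ℝ → ℝ) (hb : ∀ p q, IntervalIntegrable b volume p q) (K : ℝ) (hK : 0 ≤ K)
    (hh : ∀ s t, |h s - h t| ≤ K * |s - t|) (t₀ t₁ : ℝ) (ht : t₀ ≤ t₁) {u w u' w' : ℝ → ℝ}
    (du : ∀ t, HasDerivAt u (w t) t) (du' : ∀ t, HasDerivAt u' (w' t) t)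
    (hw : ∀ t ∈ Icc t₀ t₁, w t = w t₀ - ∫ s in t₀..t, b s * h (u s))
    (hw' : ∀ t ∈ Icc t₀ t₁, w' t = w' t₀ - ∫ s in t₀..t, b s * h (u' s))
    (e1 : u t₀ = u' t₀) (e2 : w t₀ = w' t₀) : u t₁ = u' t₁ ∧ w t₁ = w' t₁ := by
  obtain ⟨C, -, hC⟩ := stab b h hb K hK hh t₀ (t₁ - t₀) (by linarith)
  rw [add_sub_cancel] at hC
  have := hC u w u' w' du du' hw hw' t₁ ⟨ht, le_rfl⟩
  rw [e1, e2] at this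
  simp only [sub_self, abs_zero, add_zero, mul_zero] at this
  exact ⟨by linarith [abs_nonpos_iff.1 this.1], by linarith [abs_nonpos_iff.1 this.2]⟩

lemma Sol.fwd {b h : ℝ → ℝ} (hb : ∀ p q, IntervalIntegrable b volume p q) {K : ℝ} (hK : 0 ≤ K)
    (hh : ∀ s t, |h s - h t| ≤ K * |s - t|) {u w u' w' : ℝ → ℝ} (s1 : Sol b h u w)
    (s2 : Sol b h u' w') (t₀ t₁ : ℝ) (ht : t₀ ≤ t₁) (e1 : u t₀ = u' t₀) (e2 : w t₀ = w' t₀) :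
    u t₁ = u' t₁ ∧ w t₁ = w' t₁ :=
  uniq b h hb K hK hh t₀ t₁ ht s1.der s2.der (fun _ _ => s1.eq _ _) (fun _ _ => s2.eq _ _) e1 e2

lemma neg_int {b : ℝ → ℝ} (hb : ∀ p q, IntervalIntegrable b volume p q) :
    ∀ p q, IntervalIntegrable (fun t => b (-t)) volume p q := fun p q => by
  have := (hb (-p) (-q)).comp_sub_left 0
  simpa using this

lemma Sol.all {b h : ℝ → ℝ} (hb : ∀ p q, IntervalIntegrable b volume p q) {K : ℝ} (hK : 0 ≤ K)
    (hh : ∀ s t, |h s - h t| ≤ K * |s - t|) {u w u' w' : ℝ → ℝ} (s1 : Sol b h u w)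
    (s2 : Sol b h u' w') (t₀ t₁ : ℝ) (e1 : u t₀ = u' t₀) (e2 : w t₀ = w' t₀) :
    u t₁ = u' t₁ ∧ w t₁ = w' t₁ := by
  rcases le_total t₀ t₁ with ht | ht
  · exact s1.fwd hb hK hh s2 t₀ t₁ ht e1 e2
  · have := s1.neg.fwd (neg_int hb) hK hh s2.neg (-t₀) (-t₁) (by linarith) (by simpa using e1)
      (by simpa using e2)
    simpa using this

/-- The zero trap. -/
lemma Sol.trap {b h : ℝ → ℝ} (hb : ∀ p q, IntervalIntegrable b volume p q) {K : ℝ} (hK : 0 ≤ K)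
    (hh : ∀ s t, |h s - h t| ≤ K * |s - t|) (hn : ∀ s ≤ 0, h s = 0) {u w : ℝ → ℝ}
    (s1 : Sol b h u w) (t₀ t₁ : ℝ) (ht : t₀ ≤ t₁) (e1 : u t₀ ≤ 0) (e2 : w t₀ ≤ 0) :
    u t₁ = u t₀ + w t₀ * (t₁ - t₀) ∧ w t₁ = w t₀ := by
  have := uniq b h hb K hK hh t₀ t₁ ht (u := u) (w := w) (u' := fun t => u t₀ + w t₀ * (t - t₀))
    (w' := fun _ => w t₀) s1.der
    (fun t => by
      have := (((hasDerivAt_id t).sub_const t₀).const_mul (w t₀)).const_add (u t₀)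
      simpa using this) (fun _ _ => s1.eq _ _) (fun t ht => by
      have : ∫ s in t₀..t, b s * h (u t₀ + w t₀ * (s - t₀)) = ∫ s in t₀..t, (0:ℝ) := by
        refine intervalIntegral.integral_congr fun s hs => ?_
        rw [uIcc_of_le ht.1] at hs
        show b s * h _ = 0
        rw [hn, mul_zero]
        nlinarith [hs.1]
      rw [this]; simp) (by simp) rfl
  exact this

lemma Sol.trap_back {b h : ℝ → ℝ} (hb : ∀ p q, IntervalIntegrable b volume p q) {K : ℝ} (hK : 0 ≤ K)
    (hh : ∀ s t, |h s - h t| ≤ K * |s - t|) (hn : ∀ s ≤ 0, h s = 0) {u w : ℝ → ℝ}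
    (s1 : Sol b h u w) (t₀ t₁ : ℝ) (ht : t₁ ≤ t₀) (e1 : u t₀ ≤ 0) (e2 : 0 ≤ w t₀) :
    u t₁ = u t₀ - w t₀ * (t₀ - t₁) := by
  have := s1.neg.trap (neg_int hb) hK hh hn (-t₀) (-t₁) (by linarith) (by simpa using e1)
    (by simpa using e2)
  simp only [neg_neg] at this
  rw [this.1]; ring

end ODE


namespace ODE

structure Env (b h : ℝ → ℝ) (K : ℝ) : Prop where
  hb : ∀ p q, IntervalIntegrable b volume p q
  hK : 0 ≤ K
  hh : ∀ s t, |h s - h t| ≤ K * |s - t|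
  hn : ∀ s ≤ 0, h s = 0
  hnn : ∀ s, 0 ≤ h s

variable {b h : ℝ → ℝ} {K : ℝ} {u w : ℝ → ℝ}

lemma Env.hc (E : Env b h K) : Continuous h := by
  refine (LipschitzWith.of_dist_le_mul (K := ⟨K, E.hK⟩) fun s t => ?_).continuous
  rw [Real.dist_eq, Real.dist_eq]; exact E.hh s t

lemma Env.le (E : Env b h K) (s B : ℝ) (hB : 0 ≤ B) (hs : s ≤ B) : h s ≤ K * B := by
  have := E.hh s 0
  have h0 := E.hn 0 le_rfl
  rcases le_total s 0 with h1 | h1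
  · rw [E.hn s h1]; exact mul_nonneg E.hK hB
  · rw [h0, sub_zero, sub_zero, abs_of_nonneg h1] at this
    exact (le_abs_self _).trans (this.trans (mul_le_mul_of_nonneg_left hs E.hK))

lemma Sol.cu (s : Sol b h u w) : Continuous u :=
  continuous_iff_continuousAt.2 fun t => (s.der t).continuousAt

lemma Env.ii (E : Env b h K) (s : Sol b h u w) (p q : ℝ) :
    IntervalIntegrable (fun t => b t * h (u t)) volume p q :=
  (E.hb p q).mul_continuousOn (E.hc.comp s.cu).continuousOn

lemma Sol.lb (s : Sol b h u w) {p q c : ℝ} (hpq : p ≤ q) (hc : ∀ t ∈ Icc p q, c ≤ w t) :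
    u p + c * (q - p) ≤ u q := by
  have := (convex_Icc p q).mul_sub_le_image_sub_of_le_deriv s.cu.continuousOn
    (fun t _ => (s.der t).differentiableAt.differentiableWithinAt) (C := c)
    (fun t ht => by rw [(s.der t).deriv]; exact hc t (interior_subset ht)) p (left_mem_Icc.2 hpq) q
    (right_mem_Icc.2 hpq) hpq
  linarith

lemma Sol.ub (s : Sol b h u w) {p q c : ℝ} (hpq : p ≤ q) (hc : ∀ t ∈ Icc p q, w t ≤ c) :
    u q ≤ u p + c * (q - p) := by
  have := (convex_Icc p q).image_sub_le_mul_sub_of_deriv_le s.cu.continuousOn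
    (fun t _ => (s.der t).differentiableAt.differentiableWithinAt) (C := c)
    (fun t ht => by rw [(s.der t).deriv]; exact hc t (interior_subset ht)) p (left_mem_Icc.2 hpq) q
    (right_mem_Icc.2 hpq) hpq
  linarith

lemma ae_icc {p q : ℝ} {P : ℝ → Prop} (hb : ∀ᵐ t, t ∈ Icc p q → P t) :
    ∀ᵐ t ∂(volume.restrict (Icc p q)), P t := (ae_restrict_iff' measurableSet_Icc).2 hb

lemma ae_sub {p q p' q' : ℝ} {P : ℝ → Prop} (hb : ∀ᵐ t, t ∈ Icc p q → P t) (h1 : p ≤ p')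
    (h2 : q' ≤ q) : ∀ᵐ t, t ∈ Icc p' q' → P t := by
  filter_upwards [hb] with t ht h3
  exact ht ⟨h1.trans h3.1, h3.2.trans h2⟩

lemma Env.anti (E : Env b h K) (s : Sol b h u w) {p q : ℝ} (hpq : p ≤ q)
    (hb : ∀ᵐ t, t ∈ Icc p q → 0 ≤ b t) : w q ≤ w p := by
  have := intervalIntegral.integral_nonneg_of_ae_restrict (f := fun t => b t * h (u t)) hpq
    (ae_icc (P := fun t => 0 ≤ b t * h (u t)) (by
      filter_upwards [hb] with t ht h1 using mul_nonneg (ht h1) (E.hnn _)))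
  rw [s.eq p q]; linarith

lemma Env.mono (E : Env b h K) (s : Sol b h u w) {p q : ℝ} (hpq : p ≤ q)
    (hb : ∀ᵐ t, t ∈ Icc p q → b t ≤ 0) : w p ≤ w q := by
  have := intervalIntegral.integral_nonneg_of_ae_restrict (f := fun t => -(b t * h (u t))) hpq
    (ae_icc (P := fun t => 0 ≤ -(b t * h (u t))) (by
      filter_upwards [hb] with t ht h1
      have := mul_nonneg (neg_nonneg.2 (ht h1)) (E.hnn (u t))
      linarith))
  rw [intervalIntegral.integral_neg] at this
  rw [s.eq p q]; linarith

lemma Env.drop_le (E : Env b h K) (s : Sol b h u w) {p q H : ℝ} (hpq : p ≤ q)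
    (hb : ∀ᵐ t, t ∈ Icc p q → 0 ≤ b t) (hH : ∀ t ∈ Icc p q, h (u t) ≤ H) :
    w p - w q ≤ H * ∫ t in p..q, b t := by
  have := intervalIntegral.integral_mono_ae_restrict hpq (E.ii s p q) ((E.hb p q).const_mul H)
    (ae_icc (P := fun t => b t * h (u t) ≤ H * b t) (by
      filter_upwards [hb] with t ht h1
      nlinarith [ht h1, hH t h1]))
  rw [intervalIntegral.integral_const_mul] at this
  rw [s.eq p q]; linarith

lemma Env.le_drop (E : Env b h K) (s : Sol b h u w) {p q H : ℝ} (hpq : p ≤ q)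
    (hb : ∀ᵐ t, t ∈ Icc p q → 0 ≤ b t) (hH : ∀ t ∈ Icc p q, H ≤ h (u t)) :
    H * (∫ t in p..q, b t) ≤ w p - w q := by
  have := intervalIntegral.integral_mono_ae_restrict hpq ((E.hb p q).const_mul H) (E.ii s p q)
    (ae_icc (P := fun t => H * b t ≤ b t * h (u t)) (by
      filter_upwards [hb] with t ht h1
      nlinarith [ht h1, hH t h1]))
  rw [intervalIntegral.integral_const_mul] at this
  rw [s.eq p q]; linarith

lemma Env.le_rise (E : Env b h K) (s : Sol b h u w) {p q H : ℝ} (hpq : p ≤ q)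
    (hb : ∀ᵐ t, t ∈ Icc p q → b t ≤ 0) (hH : ∀ t ∈ Icc p q, H ≤ h (u t)) :
    H * (∫ t in p..q, -b t) ≤ w q - w p := by
  have := intervalIntegral.integral_mono_ae_restrict hpq (E.ii s p q) ((E.hb p q).const_mul H)
    (ae_icc (P := fun t => b t * h (u t) ≤ H * b t) (by
      filter_upwards [hb] with t ht h1
      nlinarith [ht h1, hH t h1]))
  rw [intervalIntegral.integral_const_mul] at this
  rw [s.eq p q, intervalIntegral.integral_neg]; linarith

structure Hump (b : ℝ → ℝ) (T A l δ κ s e τ s' : ℝ) : Prop where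
  hT : 0 < T
  hA : 0 < A
  hl : 0 < l
  hδ : 0 < δ
  hse : s ≤ e
  hsT : τ - s ≤ T
  hle : l ≤ τ - e
  hτ : τ < s'
  bpos : ∀ᵐ t, t ∈ Icc s τ → 0 ≤ b t
  bneg : ∀ᵐ t, t ∈ Icc τ s' → b t ≤ 0
  bA : ∫ t in s..τ, b t ≤ A
  hδδ : e + δ ≤ τ - δ
  hκ : κ ≤ ∫ t in (e + δ)..(τ - δ), b t

variable {T A l δ κ s e τ s' : ℝ}

lemma Hump.sτ (H : Hump b T A l δ κ s e τ s') : s < τ := by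
  linarith [H.hse, H.hle, H.hl]

lemma Hump.bAt (H : Hump b T A l δ κ s e τ s') (E : Env b h K) {t : ℝ} (ht : t ∈ Icc s τ) :
    ∫ r in s..t, b r ≤ A := by
  have h1 := intervalIntegral.integral_add_adjacent_intervals (E.hb s t) (E.hb t τ)
  have h2 := intervalIntegral.integral_nonneg_of_ae_restrict (f := b) ht.2
    (ae_icc (P := fun t => 0 ≤ b t) (ae_sub H.bpos ht.1 le_rfl))
  linarith [H.bA]

lemma Hump.anti (H : Hump b T A l δ κ s e τ s') (E : Env b h K) (S : Sol b h u w) {p q : ℝ}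
    (h1 : s ≤ p) (h2 : p ≤ q) (h3 : q ≤ τ) : w q ≤ w p :=
  E.anti S h2 (ae_sub H.bpos h1 h3)

lemma Hump.mono (H : Hump b T A l δ κ s e τ s') (E : Env b h K) (S : Sol b h u w) {p q : ℝ}
    (h1 : τ ≤ p) (h2 : p ≤ q) (h3 : q ≤ s') : w p ≤ w q :=
  E.mono S h2 (ae_sub H.bneg h1 h3)

lemma Hump.up (H : Hump b T A l δ κ s e τ s') (E : Env b h K) (S : Sol b h u w) {t Y : ℝ}
    (ht : t ∈ Icc s τ) (hY : 0 ≤ Y) (hw : w s ≤ Y) : u t ≤ u s + Y * T := by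
  have := S.ub ht.1 (c := Y) fun r hr => (H.anti E S le_rfl hr.1 (hr.2.trans ht.2)).trans hw
  have h2 : Y * (t - s) ≤ Y * T := mul_le_mul_of_nonneg_left (by linarith [H.hsT, ht.2]) hY
  linarith

/-- bound on the drop of the slope -/
lemma Hump.drop (H : Hump b T A l δ κ s e τ s') (E : Env b h K) (S : Sol b h u w) {t B : ℝ}
    (ht : t ∈ Icc s τ) (hB : 0 ≤ B) (hu : ∀ r ∈ Icc s t, h (u r) ≤ B) : w s - B * A ≤ w t := by
  have h1 := E.drop_le S ht.1 (ae_sub H.bpos le_rfl ht.2) hu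
  have h2 := mul_le_mul_of_nonneg_left (H.bAt E ht) hB
  linarith

lemma Hump.wτ (H : Hump b T A l δ κ s e τ s') (E : Env b h K) (S : Sol b h u w) {ε Y1 Y2 : ℝ}
    (hε : 0 ≤ ε) (hx : u s ≤ ε) (h1 : -Y1 ≤ w s) (h2 : w s ≤ Y2) (hY2 : 0 ≤ Y2) :
    -(Y1 + K * (ε + Y2 * T) * A) ≤ w τ := by
  have hB : 0 ≤ ε + Y2 * T := by have := H.hT; positivity
  have := H.drop E S (right_mem_Icc.2 H.sτ.le) (B := K * (ε + Y2 * T)) (mul_nonneg E.hK hB)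
    (fun r hr => E.le _ _ hB (by linarith [H.up E S hr hY2 h2]))
  linarith

lemma Hump.stable (H : Hump b T A l δ κ s e τ s') (E : Env b h K) (S : Sol b h u w)
    {ε C Y2 c γ : ℝ} (hC : -C ≤ w τ) (hY2 : 0 ≤ Y2) (hw : w s' ≤ Y2) (hc : τ ≤ c)
    (hc' : c ≤ s') (hcε : Y2 * (s' - c) ≤ ε / 2) (hγ : ∀ v, ε / 2 ≤ v → γ ≤ h v)
    (hi : Y2 + C < γ * ∫ t in c..s', -b t) : u s' ≤ ε := by
  by_contra hcon
  push Not at hcon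
  have h1 : ∀ t ∈ Icc c s', γ ≤ h (u t) := by
    intro t ht
    apply hγ
    have := S.ub ht.2 (c := Y2) fun r hr =>
      (H.mono E S (hc.trans (ht.1.trans hr.1)) hr.2 le_rfl).trans hw
    nlinarith [ht.1]
  have h2 := E.le_rise S hc' (ae_sub H.bneg hc le_rfl) h1
  have h3 := H.mono E S le_rfl hc hc'
  linarith

/-- if `u` is small on the hump, the slope stays large -/
lemma Hump.small (H : Hump b T A l δ κ s e τ s') (E : Env b h K) (S : Sol b h u w)
    {η δη D : ℝ} (hη : 0 ≤ η) (hsm : ∀ v, 0 ≤ v → v ≤ δη → h v ≤ η * v) (hD : 0 ≤ D)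
    (hDδ : D ≤ δη) (hu : ∀ t ∈ Icc s τ, u t ≤ D) (hy : 2 * (η * D * A) ≤ w s) :
    (∀ t ∈ Icc s τ, w s / 2 ≤ w t) ∧ u s + w s / 2 * (τ - s) ≤ u τ := by
  have h1 : ∀ t ∈ Icc s τ, w s / 2 ≤ w t := by
    intro t ht
    have := H.drop E S ht (B := η * D) (mul_nonneg hη hD) fun r hr => by
      have h3 := hu r ⟨hr.1, hr.2.trans ht.2⟩
      rcases le_total (u r) 0 with h2 | h2
      · rw [E.hn _ h2]; exact mul_nonneg hη hD
      · exact (hsm _ h2 (h3.trans hDδ)).trans (mul_le_mul_of_nonneg_left h3 hη)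
    linarith
  exact ⟨h1, S.lb H.sτ.le h1⟩

lemma Hump.exit_top (H : Hump b T A l δ κ s e τ s') (E : Env b h K) (S : Sol b h u w)
    {η δη ε γ Y2 : ℝ} (hη : η * (4 * A * T) ≤ 1) (hη0 : 0 ≤ η)
    (hsm : ∀ v, 0 ≤ v → v ≤ δη → h v ≤ η * v) (hx0 : 0 ≤ u s) (hx : u s ≤ ε)
    (hy : 0 < w s) (hε : ε ≤ T * w s) (hyδ : 2 * T * w s ≤ δη)
    (hγ : ∀ v, w s * l / 2 ≤ v → γ ≤ h v) (hi : Y2 ≤ γ * ∫ t in τ..s', -b t) :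
    Y2 ≤ w s' := by
  have hT := H.hT
  obtain ⟨h1, h2⟩ := H.small E S hη0 hsm (D := 2 * T * w s) (by positivity) hyδ
    (fun t ht => by linarith [H.up E S ht hy.le le_rfl]) (by
      nlinarith)
  have h3 : w s * l / 2 ≤ u τ := by nlinarith [H.hle, H.hse]
  have h4 := h1 τ (right_mem_Icc.2 H.sτ.le)
  have h5 : ∀ t ∈ Icc τ s', γ ≤ h (u t) := by
    intro t ht
    apply hγ
    have := S.lb ht.1 (c := 0) fun r hr => by
      linarith [H.mono E S le_rfl hr.1 (hr.2.trans ht.2)]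
    linarith
  have h6 := E.le_rise S H.hτ.le H.bneg h5
  linarith

lemma Hump.exit_bot (H : Hump b T A l δ κ s e τ s') (E : Env b h K) (S : Sol b h u w)
    {Y ε : ℝ} (hx : u s ≤ ε) (hY : 0 ≤ Y) (hy : w s ≤ -Y) (hε : ε ≤ Y * l) : w s' ≤ -Y := by
  have h1 := S.ub H.sτ.le (c := -Y) fun r hr => (H.anti E S le_rfl hr.1 hr.2).trans hy
  have h2 := H.anti E S le_rfl H.sτ.le le_rfl
  have h3 := (S.trap E.hb E.hK E.hh E.hn τ s' H.hτ.le (by nlinarith [H.hle, H.hse])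
    (by linarith)).2
  linarith

/-- a priori bound -/
lemma Hump.apriori (H : Hump b T A l δ κ s e τ s') (E : Env b h K) (S : Sol b h u w)
    {K1 s0 R : ℝ} (hK1 : ∀ v, s0 ≤ v → K1 * v ≤ h v) (hK0 : 0 ≤ K1) (hR : 0 < R)
    (hR0 : s0 * T ≤ δ * R) (hKK : 2 * T < K1 * κ * δ ^ 2) (hu : ∀ t ∈ Icc s τ, 0 ≤ u t) :
    ∀ t ∈ Icc s τ, u t < R := by
  obtain ⟨tm, htm, hmax⟩ := isCompact_Icc.exists_isMaxOn (nonempty_Icc.2 H.sτ.le)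
    S.cu.continuousOn
  have hmax : ∀ t ∈ Icc s τ, u t ≤ u tm := fun t ht => hmax ht
  set M := u tm with hM
  suffices M < R from fun t ht => (hmax t ht).trans_lt this
  by_contra hcon
  push Not at hcon
  have hM0 : 0 < M := hR.trans_le hcon
  have hT := H.hT
  have hδ := H.hδ
  have hse := H.hse
  have hdd := H.hδδ
  have htan1 : ∀ t ∈ Icc s τ, ∀ r ∈ Icc s t, u r + w t * (t - r) ≤ u t := fun t ht r hr =>
    S.lb hr.2 fun q hq => H.anti E S (hr.1.trans hq.1) hq.2 ht.2
  have htan2 : ∀ t ∈ Icc s τ, ∀ r ∈ Icc t τ, u r ≤ u t + w t * (r - t) := fun t ht r hr =>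
    S.ub hr.1 fun q hq => H.anti E S ht.1 hq.1 (hq.2.trans hr.2)
  have hlow : ∀ t ∈ Icc (e + δ) (τ - δ), δ * M ≤ T * u t := by
    intro t ht
    have ht' : t ∈ Icc s τ := ⟨by linarith [ht.1], by linarith [ht.2]⟩
    have hsT := H.hsT
    have ut := hu t ht'
    rcases le_total tm t with h1 | h1
    · have a1 := htan1 t ht' tm ⟨htm.1, h1⟩
      have a2 := htan2 t ht' τ (right_mem_Icc.2 ht'.2)
      have a3 := hu τ (right_mem_Icc.2 H.sτ.le)
      have a4 : M * (τ - t) ≤ u t * (τ - tm) := by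
        nlinarith [mul_le_mul_of_nonneg_left a1 (show 0 ≤ τ - t by linarith [ht.2]),
          mul_le_mul_of_nonneg_left (a3.trans a2) (show 0 ≤ t - tm by linarith)]
      have a5 : M * δ ≤ M * (τ - t) := mul_le_mul_of_nonneg_left (by linarith [ht.2]) hM0.le
      have a6 : u t * (τ - tm) ≤ u t * T := mul_le_mul_of_nonneg_left (by linarith [htm.1]) ut
      linarith
    · have a1 := htan2 t ht' tm ⟨h1, htm.2⟩
      have a2 := htan1 t ht' s (left_mem_Icc.2 ht'.1)
      have a3 := hu s (left_mem_Icc.2 H.sτ.le)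
      have a4 : M * (t - s) ≤ u t * (tm - s) := by
        nlinarith [mul_le_mul_of_nonneg_left a1 (show 0 ≤ t - s by linarith [ht.1]),
          mul_le_mul_of_nonneg_left a2 (show 0 ≤ tm - t by linarith)]
      have a5 : M * δ ≤ M * (t - s) := mul_le_mul_of_nonneg_left (by linarith [ht.1]) hM0.le
      have a6 : u t * (tm - s) ≤ u t * T := mul_le_mul_of_nonneg_left (by linarith [htm.2]) ut
      linarith
  have hα : e + δ ∈ Icc s τ := ⟨by linarith, by linarith⟩
  have hβ : τ - δ ∈ Icc s τ := ⟨by linarith, by linarith⟩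
  have wα : w (e + δ) * δ ≤ M := by
    have a1 := htan1 _ hα s (left_mem_Icc.2 hα.1)
    have a3 := hu s (left_mem_Icc.2 H.sτ.le)
    have a4 := hmax _ hα
    rcases le_total (w (e + δ)) 0 with h1 | h1
    · nlinarith
    · nlinarith
  have wβ : -M ≤ w (τ - δ) * δ := by
    have a1 := htan2 _ hβ τ (right_mem_Icc.2 hβ.2)
    have a3 := hu τ (right_mem_Icc.2 H.sτ.le)
    have a4 := hmax _ hβ
    linarith
  have hd := E.le_drop S hdd (ae_sub H.bpos hα.1 hβ.2) (H := K1 * (δ * M / T)) fun t ht => by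
    have a1 : δ * M / T ≤ u t := by
      rw [div_le_iff₀ hT]; linarith [hlow t ht]
    have a2 : s0 ≤ u t := by
      refine le_trans ?_ a1
      rw [le_div_iff₀ hT]
      nlinarith
    exact (mul_le_mul_of_nonneg_left a1 hK0).trans (hK1 _ a2)
  have hd2 : K1 * (δ * M / T) * κ ≤ w (e + δ) - w (τ - δ) :=
    (mul_le_mul_of_nonneg_left H.hκ (by positivity)).trans hd
  have hd3 : K1 * (δ * M / T) * κ * δ ≤ 2 * M := by
    have := mul_le_mul_of_nonneg_right hd2 hδ.le
    linarith
  have hd4 : K1 * (δ * M / T) * κ * δ = (K1 * κ * δ ^ 2) * M / T := by ring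
  rw [hd4, div_le_iff₀ hT] at hd3
  nlinarith

lemma Hump.exit_big (H : Hump b T A l δ κ s e τ s') (E : Env b h K) (S : Sol b h u w)
    {K1 s0 R Y Y2 : ℝ} (hK1 : ∀ v, s0 ≤ v → K1 * v ≤ h v) (hK0 : 0 ≤ K1) (hR : 0 < R)
    (hR0 : s0 * T ≤ δ * R) (hKK : 2 * T < K1 * κ * δ ^ 2) (hx0 : 0 ≤ u s)
    (hY0 : 0 ≤ Y) (hYR : Y * T ≤ R) (hw : w s = Y2) (hY2 : K * R * A + R / l ≤ Y2) :
    w s' ≤ -Y := by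
  have hl := H.hl
  have hRl : 0 < R / l := by positivity
  have key : ∀ t ∈ Icc s τ, (∀ r ∈ Icc s t, u r < R) → R / l ≤ w t := fun t ht hr => by
    have := H.drop E S ht (B := K * R) (mul_nonneg E.hK hR.le)
      fun r h1 => E.le _ _ hR.le (hr r h1).le
    linarith
  obtain ⟨t1, ht1, hneg⟩ : ∃ t1 ∈ Icc s τ, u t1 < 0 := by
    by_contra hcon
    push Not at hcon
    have h1 := H.apriori E S hK1 hK0 hR hR0 hKK hcon
    have h2 := S.lb H.sτ.le (c := R / l) fun t ht => key t ht fun r hr => h1 r ⟨hr.1, hr.2.trans ht.2⟩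
    have h3 := h1 τ (right_mem_Icc.2 H.sτ.le)
    have h4 : R ≤ R / l * (τ - s) := by
      rw [div_mul_eq_mul_div, le_div_iff₀ hl]
      exact mul_le_mul_of_nonneg_left (by linarith [H.hle, H.hse]) hR.le
    linarith
  obtain ⟨t0, ht0, hbig⟩ : ∃ t0 ∈ Icc s t1, R ≤ u t0 := by
    by_contra hcon
    push Not at hcon
    have := S.lb ht1.1 (c := 0) fun t ht => by
      have := key t ⟨ht.1, ht.2.trans ht1.2⟩ fun r hr => hcon r ⟨hr.1, hr.2.trans ht.2⟩
      linarith
    linarith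
  have h1 := S.lb ht0.2 (c := w t1) fun t ht =>
    H.anti E S (ht0.1.trans ht.1) ht.2 ht1.2
  have h2 : w t1 ≤ -Y := by
    by_contra hcon
    push Not at hcon
    have a1 : t1 - t0 ≤ T := by linarith [H.hsT, ht0.1, ht1.2]
    nlinarith [ht0.2]
  have h3 := (S.trap E.hb E.hK E.hh E.hn t1 s' (ht1.2.trans H.hτ.le) hneg.le (by linarith)).2
  linarith

end ODE


namespace ODE

lemma find_idx (s : ℕ → ℝ) (t : ℝ) (h0 : s 0 ≤ t) (N : ℕ) (h1 : t < s N) :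
    ∃ n, t ∈ Icc (s n) (s (n+1)) := by
  induction N with
  | zero => exact absurd h1 (not_lt.2 h0)
  | succ k ih =>
    rcases lt_or_ge t (s k) with h | h
    · exact ih h
    · exact ⟨k, h, h1.le⟩

lemma cont_of_bound (F : ℝ → ℝ → ℝ) (C : ℝ) (hC : 0 ≤ C)
    (hF : ∀ x y x' y', |F x y - F x' y'| ≤ C * (|x - x'| + |y - y'|)) :
    Continuous (fun p : ℝ × ℝ => F p.1 p.2) := by
  refine (LipschitzWith.of_dist_le_mul (K := ⟨2 * C, by positivity⟩) fun p q => ?_).continuous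
  rw [Real.dist_eq]
  show _ ≤ (2 * C) * dist p q
  have h1 : |p.1 - q.1| ≤ dist p q := by rw [Prod.dist_eq, ← Real.dist_eq]; exact le_max_left _ _
  have h2 : |p.2 - q.2| ≤ dist p q := by rw [Prod.dist_eq, ← Real.dist_eq]; exact le_max_right _ _
  have := hF p.1 p.2 q.1 q.2
  nlinarith

set_option maxHeartbeats 2000000 in
theorem assemble {b h : ℝ → ℝ} {K T A l δ κ η δη K1 s0 R Y Y2 γ : ℝ} (E : Env b h K)
    (hper : Function.Periodic b T) (m : ℕ) (hm : 1 ≤ m) (s e τ c : ℕ → ℝ)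
    (H : ∀ n, Hump b T A l δ κ (s n) (e n) (τ n) (s (n+1)))
    (hz : ∀ n, ∀ᵐ t, t ∈ Icc (s n) (e n) → b t ≤ 0)
    (ps : ∀ n, s (n + m) = s n + T)
    (hη : η * (4 * A * T) ≤ 1) (hη0 : 0 ≤ η) (hsm : ∀ v, 0 ≤ v → v ≤ δη → h v ≤ η * v)
    (hK1 : ∀ v, s0 ≤ v → K1 * v ≤ h v) (hK0 : 0 ≤ K1) (hR : 0 < R)
    (hR0 : s0 * T ≤ δ * R) (hKK : 2 * T < K1 * κ * δ ^ 2)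
    (hY : 0 < Y) (hYδ : 2 * T * Y ≤ δη) (hYR : Y * T ≤ R) (hlT : l ≤ T)
    (hY2 : K * R * A + R / l + Y ≤ Y2)
    (hc : ∀ n, τ n ≤ c n) (hc' : ∀ n, c n ≤ s (n+1))
    (hcε : ∀ n, Y2 * (s (n+1) - c n) ≤ Y * l / 16 / 2)
    (hγ0 : 0 < γ) (hγ : ∀ v, Y * l ^ 2 / (32 * T) ≤ v → γ ≤ h v)
    (hi : ∀ n, Y2 + (Y + K * (Y * l / 16 + Y2 * T) * A) < γ * ∫ t in (c n)..(s (n+1)), -b t)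
    (k : ℕ) (hk : 1 ≤ k) (S : ℕ → Bool) (hS : ∃ j < k * m, S j = true) :
    ∃ u w, Sol b h u w ∧ (∀ t, 0 < u t) ∧ Function.Periodic u ((k:ℝ) * T) ∧ (∀ t, u t < R) ∧
      ∀ n < k * m, (S n = false → ∀ t ∈ Icc (e n) (τ n), u t ≤ Y * l / 8) ∧
        (S n = true → ∃ t ∈ Icc (e n) (τ n), Y * l / 4 < u t) := by
  have hT : 0 < T := (H 0).hT
  have hA : 0 < A := (H 0).hA
  have hl : 0 < l := (H 0).hl
  have hK := E.hK
  set N := k * m with hN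
  have hN0 : 0 < N := Nat.mul_pos hk hm
  have : NeZero N := ⟨hN0.ne'⟩
  have hRl : 0 < R / l := by positivity
  have hKRA : 0 ≤ K * R * A := by positivity
  have hYY2 : Y ≤ Y2 := by linarith
  have hY20 : 0 < Y2 := by linarith
  have hsm1 : ∀ n, s n < s (n+1) := fun n => (H n).sτ.trans (H n).hτ
  have hkT : 0 < (k:ℝ) * T := by
    have : (0:ℝ) < k := by exact_mod_cast hk
    positivity
  have psj : ∀ j n, s (n + j * m) = s n + j * T := by
    intro j
    induction j with
    | zero => intro n; simp
    | succ j ih =>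
      intro n
      have : n + (j + 1) * m = (n + j * m) + m := by ring
      rw [this, ps, ih]; push_cast; ring
  have psN : ∀ n, s (n + N) = s n + k * T := fun n => psj k n
  have hperk : ∀ t, b (t + k * T) = b t := fun t => (hper.nat_mul k) t
  set ε := Y * l / 16 with hε
  set Y1 := Y * l / (16 * T) with hY1
  have hε0 : 0 < ε := by positivity
  have hY10 : 0 < Y1 := by positivity
  have hεY1 : T * Y1 = ε := by rw [hε, hY1]; field_simp
  have hY1Y : Y1 ≤ Y / 16 := by
    rw [hY1, div_le_div_iff₀ (by positivity) (by norm_num)]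
    nlinarith
  have hεT : ε ≤ T * Y := by rw [hε]; nlinarith
  have hγa : ∀ v, ε / 2 ≤ v → γ ≤ h v := fun v hv => hγ v (le_trans (by
    rw [hε, div_le_iff₀ (by positivity)]
    nlinarith [mul_pos hY hl]) hv)
  have hγb : ∀ v, Y1 * l / 2 ≤ v → γ ≤ h v := fun v hv => hγ v (le_trans (by
    rw [hY1]; apply le_of_eq; field_simp; ring) hv)
  have hγc : ∀ v, Y * l / 2 ≤ v → γ ≤ h v := fun v hv => hγb v (le_trans (by
    nlinarith) hv)
  set C := Y + K * (ε + Y2 * T) * A with hC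
  have hC0 : 0 ≤ C := by positivity
  have hiτ : ∀ n, Y2 ≤ γ * ∫ t in (τ n)..(s (n+1)), -b t := by
    intro n
    have hbn : ∀ p q, IntervalIntegrable (fun t => -b t) volume p q := fun p q => (E.hb p q).neg
    have h1 := intervalIntegral.integral_add_adjacent_intervals (hbn (τ n) (c n))
      (hbn (c n) (s (n+1)))
    have h2 := intervalIntegral.integral_nonneg_of_ae_restrict (f := fun t => -b t) (hc n)
      (ae_icc (P := fun t => 0 ≤ -b t) (by
        filter_upwards [ae_sub (H n).bneg le_rfl (hc' n)] with t ht h1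
        linarith [ht h1]))
    have h3 := hi n
    have h4 : γ * ∫ t in (c n)..(s (n+1)), -b t ≤ γ * ∫ t in (τ n)..(s (n+1)), -b t :=
      mul_le_mul_of_nonneg_left (by linarith) hγ0.le
    linarith
  -- the flow
  choose U V hSol hU hV using fun (n : ℕ) (x y : ℝ) =>
    exists_sol b h E.hb T hT hper K hK E.hh (E.hn 0 le_rfl) (s n) x y
  have hcont : ∀ n, ∃ C, 0 ≤ C ∧ ∀ x y x' y',
      |U n x y (s (n+1)) - U n x' y' (s (n+1))| ≤ C * (|x - x'| + |y - y'|) ∧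
      |V n x y (s (n+1)) - V n x' y' (s (n+1))| ≤ C * (|x - x'| + |y - y'|) := by
    intro n
    obtain ⟨C, hC, hst⟩ := stab b h E.hb K hK E.hh (s n) (s (n+1) - s n) (by linarith [hsm1 n])
    refine ⟨C, hC, fun x y x' y' => ?_⟩
    have := hst _ _ _ _ (hSol n x y).der (hSol n x' y').der (fun t _ => (hSol n x y).eq _ _)
      (fun t _ => (hSol n x' y').eq _ _) (s (n+1)) ⟨(hsm1 n).le, by linarith⟩
    rwa [hU, hU, hV, hV] at this
  have hshift : ∀ n x y, U (n + N) x y (s (n + N + 1)) = U n x y (s (n+1)) ∧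
      V (n + N) x y (s (n + N + 1)) = V n x y (s (n+1)) := by
    intro n x y
    have h1 := (hSol (n + N) x y).shift (k * T)
    simp only [hperk] at h1
    have h2 := h1.all E.hb hK E.hh (hSol n x y) (s n) (s (n+1)) (by
      show U (n + N) x y (s n + k * T) = _
      rw [← psN, hU, hU]) (by
      show V (n + N) x y (s n + k * T) = _
      rw [← psN, hV, hV])
    have h3 : n + N + 1 = (n + 1) + N := by ring
    rw [h3, psN]
    exact h2
  let S' : ℕ → Bool := fun n => S (n % N)
  have pS : ∀ n, S' (n + N) = S' n := fun n => by simp [S']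
  let lo : ℕ → ℝ := fun n => if S' n then Y else -Y
  let hi' : ℕ → ℝ := fun n => if S' n then Y2 else Y1
  have hlo1 : ∀ n, -Y ≤ lo n := fun n => by
    simp only [lo]; split_ifs <;> linarith
  have hhi1 : ∀ n, hi' n ≤ Y2 := fun n => by
    simp only [hi']; split_ifs <;> linarith
  obtain ⟨x, y, hxy⟩ := cover N ε hε0 (fun n x y => U n x y (s (n+1)))
    (fun n x y => V n x y (s (n+1)))
    (fun n => by
      obtain ⟨C, hC, h1⟩ := hcont n
      exact cont_of_bound _ C hC fun x y x' y' => (h1 x y x' y').1)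
    (fun n => by
      obtain ⟨C, hC, h1⟩ := hcont n
      exact cont_of_bound _ C hC fun x y x' y' => (h1 x y x' y').2)
    lo hi' (fun n => by simp only [lo, hi']; split_ifs <;> linarith) S'
    (fun n => by funext x y; exact (hshift n x y).1)
    (fun n => by funext x y; exact (hshift n x y).2)
    (fun n => by simp only [lo, pS]) (fun n => by simp only [hi', pS])
    (fun n hn x hx0 hx1 => by
      have e1 : lo n = Y := by simp [lo, hn]
      have e2 : hi' n = Y2 := by simp [hi', hn]
      rw [e1, e2]
      constructor
      · refine (hhi1 _).trans ?_
        have hv := hV n x Y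
        have hu := hU n x Y
        exact (H n).exit_top E (hSol n x Y) (ε := ε) hη hη0 hsm (by rw [hu]; exact hx0)
          (by rw [hu]; exact hx1) (by rw [hv]; exact hY) (by rw [hv]; exact hεT)
          (by rw [hv]; exact hYδ) (by rw [hv]; exact hγc) (hiτ n)
      · refine le_trans ?_ (hlo1 _)
        exact (H n).exit_big E (hSol n x Y2) hK1 hK0 hR hR0 hKK (by rw [hU]; exact hx0) hY.le hYR
          (hV n x Y2) (by linarith))
    (fun n hn x hx0 hx1 => by
      have e1 : lo n = -Y := by simp [lo, hn]
      have e2 : hi' n = Y1 := by simp [hi', hn]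
      rw [e1, e2]
      constructor
      · refine le_trans ?_ (hlo1 _)
        exact (H n).exit_bot E (hSol n x (-Y)) (ε := ε) (by rw [hU]; exact hx1) hY.le (by rw [hV])
          (by rw [hε]; nlinarith [mul_pos hY hl])
      · refine (hhi1 _).trans ?_
        have hv := hV n x Y1
        have hu := hU n x Y1
        exact (H n).exit_top E (hSol n x Y1) (ε := ε) hη hη0 hsm (by rw [hu]; exact hx0)
          (by rw [hu]; exact hx1) (by rw [hv]; exact hY10) (by rw [hv, hεY1])
          (by rw [hv]; refine le_trans ?_ hYδ; gcongr; linarith)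
          (by rw [hv]; exact hγb) (hiτ n))
  have hx0 := fun n => (hxy n).1
  have hx1 := fun n => (hxy n).2.1
  have hy0 := fun n => (hxy n).2.2.1
  have hy1 := fun n => (hxy n).2.2.2.1
  have px := fun n => (hxy n).2.2.2.2.1
  have py := fun n => (hxy n).2.2.2.2.2.1
  have hyn := fun n => (hxy n).2.2.2.2.2.2.1
  have hxn := fun n => (hxy n).2.2.2.2.2.2.2
  clear hxy
  have hXε : ∀ n, U n (x n) (y n) (s (n+1)) ≤ ε := by
    intro n
    refine (H n).stable E (hSol n (x n) (y n)) (C := C) (Y2 := Y2) (c := c n) (γ := γ) ?_ hY20.le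
      ?_ (hc n) (hc' n) (hcε n) hγa (hi n)
    · exact (H n).wτ E (hSol n (x n) (y n)) hε0.le (by rw [hU]; exact hx1 n)
        (by rw [hV]; exact (hlo1 n).trans (hy0 n)) (by rw [hV]; exact (hy1 n).trans (hhi1 n)) hY20.le
    · rw [← hyn]; exact (hy1 _).trans (hhi1 _)
  have hXpos : ∀ n, 0 < U n (x n) (y n) (s (n+1)) := by
    intro n
    by_contra hcon
    push Not at hcon
    have base : x (n+1) = 0 ∧ y (n+1) ≤ 0 := by
      constructor
      · rw [hxn, max_eq_left ((min_le_right _ _).trans hcon)]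
      · by_contra h1
        push Not at h1
        have h2 := (hSol n (x n) (y n)).trap_back E.hb hK E.hh E.hn (s (n+1)) (s n) (hsm1 n).le hcon
          (by rw [← hyn]; exact h1.le)
        rw [hU, ← hyn] at h2
        have h3 := hx0 n
        nlinarith [hsm1 n]
    have step : ∀ j, x (n + 1 + j) = 0 ∧ y (n + 1 + j) ≤ 0 := by
      intro j
      induction j with
      | zero => exact base
      | succ j ih =>
        obtain ⟨i1, i2⟩ := ih
        have h1 := (hSol (n+1+j) (x (n+1+j)) (y (n+1+j))).trap E.hb hK E.hh E.hn (s (n+1+j))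
          (s (n+1+j+1)) (hsm1 _).le (by rw [hU, i1]) (by rw [hV]; exact i2)
        rw [hU, hV, ← hyn, i1] at h1
        have h4 := hsm1 (n+1+j)
        refine ⟨?_, ?_⟩
        · show x (n + 1 + j + 1) = 0
          rw [hxn, i1, h1.1, max_eq_left]
          refine (min_le_right _ _).trans ?_
          nlinarith
        · show y (n + 1 + j + 1) ≤ 0
          rw [h1.2]; exact i2
    obtain ⟨j0, hj0, hSj⟩ := hS
    obtain ⟨q, hq⟩ : ∃ q, n + 1 + q = j0 + N * (n + 1) := by
      refine ⟨j0 + N * (n+1) - (n+1), ?_⟩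
      have : n + 1 ≤ N * (n+1) := Nat.le_mul_of_pos_left _ hN0
      omega
    have h1 := (step q).2
    rw [hq] at h1
    have h2 := hy0 (j0 + N * (n+1))
    have h3 : lo (j0 + N * (n+1)) = Y := by
      simp only [lo, S', Nat.add_mul_mod_self_left, Nat.mod_eq_of_lt hj0, hSj, if_true]
    linarith
  have hxn' : ∀ n, x (n+1) = U n (x n) (y n) (s (n+1)) := by
    intro n
    rw [hxn, min_eq_right (hXε n), max_eq_right (hXpos n).le]
  have hxpos : ∀ n, 0 < x n := by
    intro n
    rw [← px n]
    obtain ⟨q, hq⟩ : ∃ q, N = q + 1 := ⟨N - 1, by omega⟩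
    rw [hq, ← add_assoc, hxn']
    exact hXpos _
  set u := U 0 (x 0) (y 0) with hu
  set w := V 0 (x 0) (y 0) with hw
  have hs : Sol b h u w := hSol _ _ _
  have huw : ∀ n, u (s n) = x n ∧ w (s n) = y n := by
    intro n
    induction n with
    | zero => exact ⟨hU _ _ _, hV _ _ _⟩
    | succ n ih =>
      have := hs.all E.hb hK E.hh (hSol n (x n) (y n)) (s n) (s (n+1)) (by rw [ih.1, hU])
        (by rw [ih.2, hV])
      rw [this.1, this.2, hxn', hyn]
      exact ⟨rfl, rfl⟩
  have hperu : Function.Periodic u (k * T) := by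
    intro t
    have h1 := hs.shift (k * T)
    simp only [hperk] at h1
    refine (h1.all E.hb hK E.hh hs (s 0) t ?_ ?_).1
    · show u (s 0 + k * T) = _
      rw [← psN, (huw _).1, (huw _).1, px]
    · show w (s 0 + k * T) = _
      rw [← psN, (huw _).2, (huw _).2, py]
  have red : ∀ t, ∃ n, ∃ t' ∈ Icc (s n) (s (n+1)), u t = u t' := by
    intro t
    obtain ⟨t', ht', e1⟩ := hperu.exists_mem_Ico hkT t (s 0)
    obtain ⟨n, hn⟩ := find_idx s t' ht'.1 N (by
      have := psN 0
      rw [zero_add] at this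
      rw [this]; exact ht'.2)
    exact ⟨n, t', hn, e1⟩
  have hupos : ∀ t, 0 < u t := by
    intro t
    obtain ⟨n, t', ht', e1⟩ := red t
    rw [e1]
    by_contra hcon
    push Not at hcon
    rcases le_total (w t') 0 with h1 | h1
    · have := (hs.trap E.hb hK E.hh E.hn t' (s (n+1)) ht'.2 hcon h1).1
      have h2 := hxpos (n+1)
      rw [← (huw _).1] at h2
      nlinarith [ht'.2]
    · have := (hs.trap_back E.hb hK E.hh E.hn t' (s n) ht'.1 hcon h1)
      have h2 := hxpos n
      rw [← (huw _).1] at h2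
      nlinarith [ht'.1]
  have hRh : ∀ n, ∀ t ∈ Icc (s n) (τ n), u t < R := fun n =>
    (H n).apriori E hs hK1 hK0 hR hR0 hKK fun t _ => (hupos t).le
  refine ⟨u, w, hs, hupos, hperu, ?_, ?_⟩
  · intro t
    obtain ⟨n, t', ht', e1⟩ := red t
    rw [e1]
    rcases le_total t' (τ n) with h1 | h1
    · exact hRh n t' ⟨ht'.1, h1⟩
    · rcases le_total (w t') 0 with h2 | h2
      · have := hs.ub h1 (c := 0) fun r hr => ((H n).mono E hs hr.1 hr.2 ht'.2).trans h2
        have h3 := hRh n (τ n) (right_mem_Icc.2 (H n).sτ.le)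
        linarith
      · have := hs.lb ht'.2 (c := 0) fun r hr => h2.trans ((H n).mono E hs h1 hr.1 hr.2)
        have h3 := hRh (n+1) (s (n+1)) (left_mem_Icc.2 (H (n+1)).sτ.le)
        linarith
  · intro n hn
    have hmod : n % N = n := Nat.mod_eq_of_lt hn
    have us := (huw n).1
    have ws := (huw n).2
    constructor
    · intro hSn t ht
      have e2 : hi' n = Y1 := by simp [hi', S', hmod, hSn]
      have h1 := (H n).up E hs (t := t) ⟨(H n).hse.trans ht.1, ht.2⟩ hY10.le
        (by rw [ws, ← e2]; exact hy1 n)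
      have h2 := hx1 n
      have h3 : Y * l / 8 = ε + Y1 * T := by rw [mul_comm Y1, hεY1, hε]; ring
      rw [h3]; linarith
    · intro hSn
      have e2 : lo n = Y := by simp [lo, S', hmod, hSn]
      have hyY : Y ≤ w (s n) := by rw [ws, ← e2]; exact hy0 n
      by_contra hcon
      push Not at hcon
      have hD : ∀ t ∈ Icc (s n) (τ n), u t ≤ Y * l / 4 := by
        intro t ht
        rcases le_total (e n) t with h1 | h1
        · exact hcon t ⟨h1, ht.2⟩
        · have := hs.lb h1 (c := 0) fun r hr => by
            have := E.mono hs (ht.1.trans hr.1) (ae_sub (hz n) le_rfl hr.2)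
            linarith
          have h3 := hcon (e n) (left_mem_Icc.2 (by linarith [(H n).hle]))
          linarith
      have hYl : 0 < Y * l := mul_pos hY hl
      obtain ⟨-, h2⟩ := (H n).small E hs hη0 hsm (D := Y * l / 4) (by positivity)
        (by nlinarith) hD (by
          have : η * (Y * l / 4) * A ≤ η * (Y * T / 4) * A := by gcongr
          nlinarith)
      have h3 := hD (τ n) (right_mem_Icc.2 (H n).sτ.le)
      have h4 := hxpos n
      rw [us] at h2
      have h5 : Y / 2 * l ≤ w (s n) / 2 * (τ n - s n) := by
        apply mul_le_mul _ _ hl.le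
        · linarith
        · linarith
        · linarith [(H n).hle, (H n).hse]
      nlinarith

end ODE


namespace ODE

lemma small_g (g : ℝ → ℝ) (hgC1 : ContDiffOn ℝ 1 g (Set.Ici 0)) (hg0 : g 0 = 0)
    (hg'0 : derivWithin g (Set.Ici 0) 0 = 0) (η : ℝ) (hη : 0 < η) :
    ∃ d, 0 < d ∧ ∀ v, 0 ≤ v → v ≤ d → g v ≤ η * v := by
  have h1 : HasDerivWithinAt g 0 (Ici 0) 0 := by
    have := ((hgC1.differentiableOn (by norm_num)) 0 self_mem_Ici).hasDerivWithinAt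
    rwa [hg'0] at this
  have h2 := (hasDerivWithinAt_iff_isLittleO.1 h1).def hη
  simp only [hg0, sub_zero, smul_zero, Real.norm_eq_abs] at h2
  obtain ⟨d, hd, h3⟩ := Metric.mem_nhdsWithin_iff.1 h2
  refine ⟨d / 2, by linarith, fun v hv hv2 => ?_⟩
  have := h3 (show v ∈ Metric.ball 0 d ∩ Ici 0 from ⟨by
    rw [Metric.mem_ball, Real.dist_eq, sub_zero, abs_of_nonneg hv]; linarith, hv⟩)
  simp only [mem_ofPred_eq, abs_of_nonneg hv] at this
  exact (le_abs_self _).trans this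

lemma trunc (g : ℝ → ℝ) (hgC1 : ContDiffOn ℝ 1 g (Set.Ici 0)) (hg0 : g 0 = 0)
    (hgpos : ∀ s : ℝ, 0 < s → 0 < g s) (R K1 s0 : ℝ) (hR : 0 < R) (hK1 : 0 ≤ K1) (hs0 : 0 ≤ s0)
    (hs0R : s0 ≤ R) (hgK : ∀ v, s0 ≤ v → K1 * v ≤ g v) :
    ∃ (h : ℝ → ℝ) (K : ℝ), 0 ≤ K ∧ (∀ s t, |h s - h t| ≤ K * |s - t|) ∧ (∀ s ≤ 0, h s = 0) ∧
      (∀ s, 0 ≤ h s) ∧ (∀ s, 0 ≤ s → s ≤ R → h s = g s) ∧ (∀ v, s0 ≤ v → K1 * v ≤ h v) ∧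
      ∀ d, 0 < d → ∃ γ, 0 < γ ∧ ∀ v, d ≤ v → γ ≤ h v := by
  have hgR : ContDiffOn ℝ 1 g (Icc 0 R) := hgC1.mono Icc_subset_Ici_self
  obtain ⟨L, hL⟩ := hgR.exists_lipschitzOnWith (by norm_num) (convex_Icc 0 R) isCompact_Icc
  have hL' : ∀ p ∈ Icc 0 R, ∀ q ∈ Icc 0 R, |g p - g q| ≤ L * |p - q| := by
    intro p hp q hq
    have := hL.dist_le_mul p hp q hq
    rwa [Real.dist_eq, Real.dist_eq] at this
  have hgnn : ∀ s, 0 ≤ s → 0 ≤ g s := fun s hs => by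
    rcases hs.eq_or_lt with h | h
    · rw [← h, hg0]
    · exact (hgpos s h).le
  let cl : ℝ → ℝ := fun s => max 0 (min s R)
  have hcl : ∀ s, cl s ∈ Icc 0 R := fun s => ⟨le_max_left _ _, max_le hR.le (min_le_right _ _)⟩
  have hclL : ∀ s t, |cl s - cl t| ≤ |s - t| := by
    intro s t
    simp only [cl]
    rw [abs_le]
    have := neg_abs_le (s - t)
    have := le_abs_self (s - t)
    have := abs_nonneg (s - t)
    constructor <;> (rcases max_cases 0 (min s R) with h1 | h1 <;>
      rcases max_cases 0 (min t R) with h2 | h2 <;> rcases min_cases s R with h3 | h3 <;>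
      rcases min_cases t R with h4 | h4 <;> linarith [h1.1, h1.2, h2.1, h2.2, h3.1, h3.2, h4.1, h4.2])
  have hmL : ∀ s t : ℝ, |max (s - R) 0 - max (t - R) 0| ≤ |s - t| := by
    intro s t
    rw [abs_le]
    have := neg_abs_le (s - t)
    have := le_abs_self (s - t)
    have := abs_nonneg (s - t)
    constructor <;> (rcases max_cases (s - R) 0 with h1 | h1 <;>
      rcases max_cases (t - R) 0 with h2 | h2 <;> linarith [h1.1, h1.2, h2.1, h2.2])
  have cl1 : ∀ s, 0 ≤ s → s ≤ R → cl s = s := fun s h1 h2 => by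
    simp only [cl]; rw [min_eq_left h2, max_eq_right h1]
  have cl2 : ∀ s, s ≤ 0 → cl s = 0 := fun s h1 => by
    simp only [cl]; rw [max_eq_left ((min_le_left _ _).trans h1)]
  have cl3 : ∀ s, R ≤ s → cl s = R := fun s h1 => by
    simp only [cl]; rw [min_eq_right h1, max_eq_right hR.le]
  refine ⟨fun s => g (cl s) + K1 * max (s - R) 0, L + K1, by positivity, ?_, ?_, ?_, ?_, ?_, ?_⟩
  · intro s t
    have h1 := (hL' _ (hcl s) _ (hcl t)).trans (mul_le_mul_of_nonneg_left (hclL s t) L.2)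
    have h2 := mul_le_mul_of_nonneg_left (hmL s t) hK1
    have h3 : g (cl s) + K1 * max (s - R) 0 - (g (cl t) + K1 * max (t - R) 0) =
      (g (cl s) - g (cl t)) + K1 * (max (s - R) 0 - max (t - R) 0) := by ring
    show |g (cl s) + K1 * max (s - R) 0 - (g (cl t) + K1 * max (t - R) 0)| ≤ _
    rw [h3]
    refine (abs_add_le _ _).trans ?_
    rw [abs_mul, abs_of_nonneg hK1]
    change _ ≤ (L : ℝ) * |s - t| at h1
    linarith
  · intro s hs
    simp only [cl2 s hs, hg0]
    rw [max_eq_right (by linarith)]; ring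
  · intro s
    exact add_nonneg (hgnn _ (hcl s).1) (mul_nonneg hK1 (le_max_right _ _))
  · intro s h1 h2
    simp only [cl1 s h1 h2]
    rw [max_eq_right (by linarith)]; ring
  · intro v hv
    simp only
    rcases le_total v R with h1 | h1
    · rw [cl1 v (hs0.trans hv) h1, max_eq_right (by linarith)]
      linarith [hgK v hv]
    · rw [cl3 v h1, max_eq_left (by linarith)]
      linarith [hgK R hs0R]
  · intro d hd
    have hne : (Icc (min d R) R).Nonempty := nonempty_Icc.2 (min_le_right _ _)
    have hd0 : 0 < min d R := lt_min hd hR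
    obtain ⟨p, hp, hmin⟩ := isCompact_Icc.exists_isMinOn hne
      (hgC1.continuousOn.mono fun t ht => hd0.le.trans ht.1)
    refine ⟨g p, hgpos p (hd0.trans_le hp.1), fun v hv => ?_⟩
    have h1 : cl v ∈ Icc (min d R) R := ⟨le_max_of_le_right (min_le_min_right _ hv), (hcl v).2⟩
    have h2 : g p ≤ g (cl v) := hmin h1
    have := mul_nonneg hK1 (le_max_right (v - R) 0)
    show g p ≤ g (cl v) + K1 * max (v - R) 0
    linarith

end ODE

namespace ODE

lemma ae_shift {a : ℝ → ℝ} {c : ℝ} (hc : ∀ t, a (t - c) = a t) {P : ℝ → Prop} {p q : ℝ}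
    (h : ∀ᵐ t, t ∈ Icc p q → P (a t)) : ∀ᵐ t, t ∈ Icc (p + c) (q + c) → P (a t) := by
  have := (measurePreserving_sub_right (volume : Measure ℝ) c).quasiMeasurePreserving.ae h
  filter_upwards [this] with t ht h1
  have := ht ⟨by linarith [h1.1], by linarith [h1.2]⟩
  rwa [hc] at this

lemma int_shift {a : ℝ → ℝ} {c : ℝ} (hc : ∀ t, a (t + c) = a t) (p q : ℝ) :
    ∫ t in (p + c)..(q + c), a t = ∫ t in p..q, a t := by
  rw [← intervalIntegral.integral_comp_add_right]
  simp only [hc]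

lemma int_zero {f : ℝ → ℝ} (hf : ∀ p q, IntervalIntegrable f volume p q) {p q : ℝ} (hpq : p ≤ q)
    (h0 : ∀ᵐ t, t ∈ Icc p q → 0 ≤ f t) (hz : ∫ t in p..q, f t = 0) :
    ∀ᵐ t, t ∈ Icc p q → f t = 0 := by
  rw [intervalIntegral.integral_of_le hpq, ← integral_Icc_eq_integral_Ioc] at hz
  have h1 := (setIntegral_eq_zero_iff_of_nonneg_ae (ae_icc h0) (by
    rw [integrableOn_Icc_iff_integrableOn_Ioc]
    exact (intervalIntegrable_iff_integrableOn_Ioc_of_le hpq).1 (hf p q))).1 hz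
  exact (ae_restrict_iff' measurableSet_Icc).1 h1

lemma int_nonneg' {f : ℝ → ℝ} {p q : ℝ} (hpq : p ≤ q)
    (h0 : ∀ᵐ t, t ∈ Icc p q → 0 ≤ f t) : 0 ≤ ∫ t in p..q, f t :=
  intervalIntegral.integral_nonneg_of_ae_restrict hpq (ae_icc (P := fun t => 0 ≤ f t) h0)

lemma int_pos' {f : ℝ → ℝ} (hf : ∀ p q, IntervalIntegrable f volume p q) {p q : ℝ} (hpq : p ≤ q)
    (h : PosOn f (Icc p q)) : 0 < ∫ t in p..q, f t := by
  have h0 := (ae_restrict_iff' measurableSet_Icc).1 h.1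
  refine lt_of_le_of_ne (int_nonneg' hpq h0) fun h1 => h.2 ?_
  exact ae_icc (P := fun t => f t = 0) (int_zero hf hpq h0 h1.symm)

lemma rho {f : ℝ → ℝ} (hf : ∀ p q, IntervalIntegrable f volume p q) {p q : ℝ} (hpq : p ≤ q)
    (h : PosOn f (Icc p q)) : ∃ r, p < r ∧ r ≤ q ∧ (∀ᵐ t, t ∈ Icc r q → f t = 0) ∧
      ∀ c, p ≤ c → c < r → 0 < ∫ t in c..r, f t := by
  have h0 := (ae_restrict_iff' measurableSet_Icc).1 h.1
  have hpos := int_pos' hf hpq h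
  let F : ℝ → ℝ := fun c => ∫ t in c..q, f t
  have hF : Continuous F := by
    have h1 : F = fun c => -∫ t in q..c, f t := by
      funext c; exact intervalIntegral.integral_symm _ _
    rw [h1]
    exact (intervalIntegral.continuous_primitive hf q).neg
  let Z : Set ℝ := Icc p q ∩ F ⁻¹' {0}
  have hZc : IsCompact Z := isCompact_Icc.inter_right (isClosed_singleton.preimage hF)
  have hZn : Z.Nonempty := ⟨q, right_mem_Icc.2 hpq, by simp [F]⟩
  obtain ⟨r, hr, hmin⟩ := hZc.exists_isLeast hZn
  have hr0 : F r = 0 := hr.2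
  refine ⟨r, ?_, hr.1.2, ?_, ?_⟩
  · refine lt_of_le_of_ne hr.1.1 fun h1 => ?_
    rw [← h1] at hr0
    exact hpos.ne' hr0
  · exact int_zero hf hr.1.2 (ae_sub h0 hr.1.1 le_rfl) hr0
  · intro c h1 h2
    have h3 : ∫ t in c..r, f t = F c := by
      have := intervalIntegral.integral_add_adjacent_intervals (hf c r) (hf r q)
      have h4 : ∫ t in r..q, f t = 0 := hr0
      rw [h4, add_zero] at this
      exact this
    rw [h3]
    refine lt_of_le_of_ne (int_nonneg' (h2.le.trans hr.1.2) (ae_sub h0 h1 le_rfl)) fun h4 => ?_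
    have : r ≤ c := hmin ⟨⟨h1, h2.le.trans hr.1.2⟩, h4.symm⟩
    linarith

structure Timing (a : ℝ → ℝ) (T : ℝ) (m : ℕ) (s e τ : ℕ → ℝ) : Prop where
  ps : ∀ n, s (n + m) = s n + T
  pe : ∀ n, e (n + m) = e n + T
  pt : ∀ n, τ (n + m) = τ n + T
  se : ∀ n, s n ≤ e n
  et : ∀ n, e n < τ n
  ts : ∀ n, τ n < s (n + 1)
  pos : ∀ n, ∀ᵐ t, t ∈ Icc (s n) (τ n) → 0 ≤ a t
  zer : ∀ n, ∀ᵐ t, t ∈ Icc (s n) (e n) → a t = 0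
  neg : ∀ n, ∀ᵐ t, t ∈ Icc (τ n) (s (n+1)) → a t ≤ 0
  ip : ∀ n, 0 < ∫ t in (e n)..(τ n), a t
  im : ∀ n c, τ n ≤ c → c < s (n+1) → 0 < ∫ t in c..(s (n+1)), -a t

theorem timing (T : ℝ) (a : ℝ → ℝ) (haper : Function.Periodic a T)
    (hai : ∀ p q, IntervalIntegrable a volume p q)
    (m : ℕ) (hm : 1 ≤ m) (σ : ℕ → ℝ)
    (hσ0 : σ 0 = 0) (hσT : σ (2*m) = T) (hσmono : ∀ i < 2*m, σ i < σ (i+1))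
    (hapos : ∀ i < m, PosOn a (Set.Icc (σ (2*i)) (σ (2*i+1))))
    (haneg : ∀ i < m, PosOn (fun t => - a t) (Set.Icc (σ (2*i+1)) (σ (2*i+2)))) :
    ∃ s e τ : ℕ → ℝ, Timing a T m s e τ ∧ ∀ i < m, ∀ j : ℕ, e (i + j * m) = σ (2*i) + j * T ∧
      τ (i + j * m) = σ (2*i+1) + j * T := by
  have hm0 : 0 < m := hm
  have hrho : ∀ i, ∃ r, i < m → σ (2*i+1) < r ∧ r ≤ σ (2*i+2) ∧
      (∀ᵐ t, t ∈ Icc r (σ (2*i+2)) → -a t = 0) ∧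
      ∀ c, σ (2*i+1) ≤ c → c < r → 0 < ∫ t in c..r, -a t := by
    intro i
    by_cases hi : i < m
    · obtain ⟨r, hr⟩ := rho (fun p q => (hai p q).neg) (hσmono (2*i+1) (by omega)).le (haneg i hi)
      exact ⟨r, fun _ => hr⟩
    · exact ⟨0, fun h => absurd h hi⟩
  choose ρ hρ using hrho
  have hpn : ∀ (q : ℕ) t, a (t + q * T) = a t := fun q t => (haper.nat_mul q) t
  have hpn' : ∀ (q : ℕ) t, a (t - q * T) = a t := fun q t => by
    rw [← hpn q (t - q * T)]; congr 1; ring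
  have hp1 : ∀ (q : ℕ) t, a (t - (q * T - T)) = a t := fun q t => by
    rw [← hpn' q t, ← haper (t - q * T)]; congr 1; ring
  let e : ℕ → ℝ := fun n => σ (2 * (n % m)) + (n / m : ℕ) * T
  let τ : ℕ → ℝ := fun n => σ (2 * (n % m) + 1) + (n / m : ℕ) * T
  let s : ℕ → ℝ := fun n => ρ ((n + m - 1) % m) + (((n + m - 1) / m : ℕ) * T - T)
  have hs1 : ∀ n, s (n + 1) = ρ (n % m) + (n / m : ℕ) * T := by
    intro n
    simp only [s]
    have h1 : n + 1 + m - 1 = n + m := by omega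
    rw [h1, Nat.add_mod_right, Nat.add_div_right _ hm0]
    push_cast; ring
  have he' : ∀ n, e n = σ (2 * ((n + m - 1) % m) + 2) + (((n + m - 1) / m : ℕ) * T - T) := by
    intro n
    simp only [e]
    rcases Nat.eq_zero_or_pos (n % m) with h | h
    · obtain ⟨q, rfl⟩ := Nat.dvd_of_mod_eq_zero h
      have h1 : m * q + m - 1 = (m - 1) + m * q := by omega
      have h2 : 2 * (m - 1) + 2 = 2 * m := by omega
      rw [h, h1, Nat.add_mul_mod_self_left, Nat.add_mul_div_left _ _ hm0,
        Nat.mod_eq_of_lt (by omega : m - 1 < m), Nat.div_eq_of_lt (by omega : m - 1 < m),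
        Nat.mul_div_cancel_left _ hm0, h2, hσT, mul_zero, hσ0]
      push_cast; ring
    · obtain ⟨i, q, hi, rfl⟩ : ∃ i q, i < m ∧ n = i + m * q :=
        ⟨n % m, n / m, Nat.mod_lt _ hm0, (Nat.mod_add_div _ _).symm⟩
      rw [Nat.add_mul_mod_self_left, Nat.mod_eq_of_lt hi] at h ⊢
      have h1 : i + m * q + m - 1 = (i - 1) + m * (q + 1) := by
        rw [Nat.mul_add]; omega
      have h2 : 2 * (i - 1) + 2 = 2 * i := by omega
      rw [h1, Nat.add_mul_mod_self_left, Nat.add_mul_div_left _ _ hm0, Nat.add_mul_div_left _ _ hm0,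
        Nat.mod_eq_of_lt (by omega : i - 1 < m), Nat.div_eq_of_lt (by omega : i - 1 < m),
        Nat.div_eq_of_lt hi, h2]
      push_cast; ring
  have hse : ∀ n, s n ≤ e n := fun n => by
    rw [he' n]
    have := (hρ ((n + m - 1) % m) (Nat.mod_lt _ hm0)).2.1
    simp only [s]; linarith
  have hzer : ∀ n, ∀ᵐ t, t ∈ Icc (s n) (e n) → a t = 0 := fun n => by
    rw [he' n]
    have := (hρ ((n + m - 1) % m) (Nat.mod_lt _ hm0)).2.2.1
    have h2 := ae_shift (hp1 ((n + m - 1) / m)) (P := fun v => -v = 0) this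
    filter_upwards [h2] with t ht h3
    have := ht h3
    linarith
  have hep : ∀ n, ∀ᵐ t, t ∈ Icc (e n) (τ n) → 0 ≤ a t := fun n => by
    have := (ae_restrict_iff' measurableSet_Icc).1 (hapos (n % m) (Nat.mod_lt _ hm0)).1
    exact ae_shift (hpn' (n / m)) (P := fun v => 0 ≤ v) this
  have hlt : ∀ n, n % m < m := fun n => Nat.mod_lt _ hm0
  refine ⟨s, e, τ, ⟨?_, ?_, ?_, hse, ?_, ?_, ?_, hzer, ?_, ?_, ?_⟩, ?_⟩
  · intro n
    simp only [s]
    have h1 : n + m + m - 1 = n + m - 1 + m := by omega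
    rw [h1, Nat.add_mod_right, Nat.add_div_right _ hm0]
    push_cast; ring
  · intro n
    simp only [e]
    rw [Nat.add_mod_right, Nat.add_div_right _ hm0]
    push_cast; ring
  · intro n
    simp only [τ]
    rw [Nat.add_mod_right, Nat.add_div_right _ hm0]
    push_cast; ring
  · intro n
    have := hσmono (2 * (n % m)) (by have := hlt n; omega)
    simp only [e, τ]; linarith
  · intro n
    rw [hs1]
    have := (hρ (n % m) (hlt n)).1
    simp only [τ]; linarith
  · intro n
    filter_upwards [hzer n, hep n] with t h1 h2 h3
    rcases le_total t (e n) with h | h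
    · exact (h1 ⟨h3.1, h⟩).ge
    · exact h2 ⟨h, h3.2⟩
  · intro n
    rw [hs1]
    have := (ae_restrict_iff' measurableSet_Icc).1 (haneg (n % m) (hlt n)).1
    have h1 := ae_shift (hpn' (n / m)) (P := fun v => 0 ≤ -v)
      (ae_sub this le_rfl (hρ (n % m) (hlt n)).2.1)
    filter_upwards [h1] with t ht h3
    have := ht h3
    linarith
  · intro n
    simp only [e, τ]
    rw [int_shift (hpn _)]
    exact int_pos' hai (hσmono (2 * (n % m)) (by have := hlt n; omega)).le (hapos _ (hlt n))
  · intro n c h1 h2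
    rw [hs1] at h2 ⊢
    have h3 := (hρ (n % m) (hlt n)).2.2.2 (c - (n / m : ℕ) * T) (by
      simp only [τ] at h1; linarith) (by linarith)
    have h4 := int_shift (a := fun t => -a t) (c := (n / m : ℕ) * T) (fun t => by rw [hpn])
      (c - (n / m : ℕ) * T) (ρ (n % m))
    rw [sub_add_cancel] at h4
    rw [h4]; exact h3
  · intro i hi j
    simp only [e, τ]
    rw [Nat.add_mul_mod_self_right, Nat.add_mul_div_right _ _ hm0, Nat.mod_eq_of_lt hi,
      Nat.div_eq_of_lt hi, zero_add]
    exact ⟨rfl, rfl⟩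

lemma unif (m : ℕ) (hm : 1 ≤ m) (f : ℕ → ℝ) (hf : ∀ n, 0 < f n) (hp : ∀ n, f (n + m) = f n) :
    ∃ d, 0 < d ∧ ∀ n, d ≤ f n := by
  obtain ⟨i, _, hi⟩ := Finset.exists_min_image (Finset.range m) f ⟨0, Finset.mem_range.2 hm⟩
  refine ⟨f i, hf i, fun n => ?_⟩
  have h1 : f (n % m) = f n := Function.Periodic.map_mod_nat hp n
  rw [← h1]
  exact hi _ (Finset.mem_range.2 (Nat.mod_lt _ hm))

lemma unif_up (m : ℕ) (hm : 1 ≤ m) (f : ℕ → ℝ) (hp : ∀ n, f (n + m) = f n) :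
    ∃ d, ∀ n, f n ≤ d := by
  obtain ⟨i, _, hi⟩ := Finset.exists_max_image (Finset.range m) f ⟨0, Finset.mem_range.2 hm⟩
  refine ⟨f i, fun n => ?_⟩
  have h1 : f (n % m) = f n := Function.Periodic.map_mod_nat hp n
  rw [← h1]
  exact hi _ (Finset.mem_range.2 (Nat.mod_lt _ hm))

lemma Timing.delta {a : ℝ → ℝ} {T : ℝ} {m : ℕ} {s e τ : ℕ → ℝ} (H : Timing a T m s e τ)
    (hm : 1 ≤ m) (haper : Function.Periodic a T) (hai : ∀ p q, IntervalIntegrable a volume p q) :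
    ∃ δ κ : ℝ, 0 < δ ∧ 0 < κ ∧ ∀ n, e n + δ ≤ τ n - δ ∧ κ ≤ ∫ t in (e n + δ)..(τ n - δ), a t := by
  have h1 : ∀ n, ∀ᶠ δ in nhdsWithin (0:ℝ) (Ioi 0),
      e n + δ ≤ τ n - δ ∧ 0 < ∫ t in (e n + δ)..(τ n - δ), a t := by
    intro n
    apply eventually_nhdsWithin_of_eventually_nhds
    have hc : Continuous fun δ => ∫ t in (e n + δ)..(τ n - δ), a t := by
      have hpr := intervalIntegral.continuous_primitive hai 0
      have h2 : (fun δ => ∫ t in (e n + δ)..(τ n - δ), a t) =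
          fun δ => (∫ t in (0:ℝ)..(τ n - δ), a t) - ∫ t in (0:ℝ)..(e n + δ), a t := by
        funext δ
        rw [intervalIntegral.integral_interval_sub_left (hai _ _) (hai _ _)]
      rw [h2]
      exact (hpr.comp (continuous_const.sub continuous_id)).sub
        (hpr.comp (continuous_const.add continuous_id))
    have h3 : ∀ᶠ δ in nhds (0:ℝ), 0 < ∫ t in (e n + δ)..(τ n - δ), a t := by
      apply hc.continuousAt.eventually (lt_mem_nhds _)
      simpa using H.ip n
    have h4 : ∀ᶠ δ in nhds (0:ℝ), e n + δ < τ n - δ := by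
      apply (continuous_const.add continuous_id).continuousAt.eventually_lt
        (continuous_const.sub continuous_id).continuousAt
      simpa using H.et n
    filter_upwards [h3, h4] with δ a1 a2 using ⟨a2.le, a1⟩
  have h2 := (Filter.eventually_all_finset (Finset.range m)).2 fun n _ => h1 n
  obtain ⟨δ, hδ, hδ0⟩ := (h2.and self_mem_nhdsWithin).exists
  have hδ0 : 0 < δ := hδ0
  have hpi : ∀ n, ∫ t in (e (n + m) + δ)..(τ (n + m) - δ), a t =
      ∫ t in (e n + δ)..(τ n - δ), a t := by
    intro n
    rw [H.pe, H.pt, ← int_shift (c := T) (fun t => haper t) (e n + δ) (τ n - δ)]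
    congr 1 <;> ring
  have key : ∀ n, e n + δ ≤ τ n - δ ∧ 0 < ∫ t in (e n + δ)..(τ n - δ), a t := by
    intro n
    have h3 := hδ (n % m) (Finset.mem_range.2 (Nat.mod_lt _ hm))
    have h4 : Function.Periodic (fun n => τ n - e n) m := fun n => by
      simp only [H.pe, H.pt]; ring
    have h5 : τ (n % m) - e (n % m) = τ n - e n := h4.map_mod_nat n
    have h6 : ∫ t in (e (n % m) + δ)..(τ (n % m) - δ), a t = ∫ t in (e n + δ)..(τ n - δ), a t :=
      Function.Periodic.map_mod_nat (f := fun n => ∫ t in (e n + δ)..(τ n - δ), a t) hpi n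
    rw [← h6]
    exact ⟨by linarith [h3.1], h3.2⟩
  obtain ⟨κ, hκ, hκ'⟩ := unif m hm _ (fun n => (key n).2) hpi
  exact ⟨δ, κ, hδ0, hκ, fun n => ⟨(key n).1, hκ' n⟩⟩

end ODE
namespace ODE

lemma int_congr' {f g : ℝ → ℝ} {p q : ℝ} (hpq : p ≤ q) (h : ∀ᵐ t, t ∈ Icc p q → f t = g t) :
    ∫ t in p..q, f t = ∫ t in p..q, g t := by
  refine intervalIntegral.integral_congr_ae ?_
  filter_upwards [h] with t ht h1
  rw [uIoc_of_le hpq] at h1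
  exact ht (Ioc_subset_Icc_self h1)

lemma loc_of_ii {f : ℝ → ℝ} (h : ∀ p q, IntervalIntegrable f volume p q) :
    LocallyIntegrable f volume := fun x =>
  ⟨Ioc (x - 1) (x + 1), Ioc_mem_nhds (by linarith) (by linarith), (h (x - 1) (x + 1)).1⟩

set_option maxHeartbeats 2000000 in
theorem core (T : ℝ) (hT : 0 < T) (a : ℝ → ℝ)
    (haper : Function.Periodic a T)
    (haloc : MeasureTheory.LocallyIntegrable a MeasureTheory.volume)
    (m : ℕ) (hm : 1 ≤ m) (σ : ℕ → ℝ)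
    (hσ0 : σ 0 = 0) (hσT : σ (2*m) = T) (hσmono : ∀ i < 2*m, σ i < σ (i+1))
    (hapos : ∀ i < m, PosOn a (Set.Icc (σ (2*i)) (σ (2*i+1))))
    (haneg : ∀ i < m, PosOn (fun t => - a t) (Set.Icc (σ (2*i+1)) (σ (2*i+2))))
    (g : ℝ → ℝ) (hgC1 : ContDiffOn ℝ 1 g (Set.Ici 0))
    (hg0 : g 0 = 0) (hgpos : ∀ s : ℝ, 0 < s → 0 < g s)
    (hg'0 : derivWithin g (Set.Ici 0) 0 = 0)
    (hgsup : Filter.Tendsto (fun s => g s / s) Filter.atTop Filter.atTop) :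
    ∃ r R μstar : ℝ, 0 < r ∧ r < R ∧ 0 < μstar ∧
      ∀ μ : ℝ, μstar < μ → ∀ k : ℕ, 1 ≤ k →
        (∀ S : ℕ → Bool, (∃ j < k * m, S j = true) →
          ∃ u : ℝ → ℝ,
            IsSol (fun t s => (max (a t) 0 - μ * max (-a t) 0) * g s) u ∧
            (∀ t, 0 < u t) ∧ Function.Periodic u ((k:ℝ) * T) ∧
            ∀ i < m, ∀ ℓ < k,
              (S (i + ℓ * m) = false →
                sSup (u '' Set.Icc (σ (2*i) + (ℓ:ℝ) * T) (σ (2*i+1) + (ℓ:ℝ) * T)) < r) ∧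
              (S (i + ℓ * m) = true →
                r < sSup (u '' Set.Icc (σ (2*i) + (ℓ:ℝ) * T) (σ (2*i+1) + (ℓ:ℝ) * T)) ∧
                sSup (u '' Set.Icc (σ (2*i) + (ℓ:ℝ) * T) (σ (2*i+1) + (ℓ:ℝ) * T)) < R)) := by
  have hai : ∀ p q, IntervalIntegrable a volume p q := fun p q =>
    (haloc.integrableOn_isCompact isCompact_uIcc).intervalIntegrable
  obtain ⟨s, e, τ, H, hidx⟩ := timing T a haper hai m hm σ hσ0 hσT hσmono hapos haneg
  obtain ⟨δ, κ, hδ, hκ, hδκ⟩ := H.delta hm haper hai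
  obtain ⟨l, hl, hl'⟩ := unif m hm (fun n => τ n - e n) (fun n => by linarith [H.et n])
    (fun n => by simp only [H.pe, H.pt]; ring)
  obtain ⟨A0, hA0⟩ := unif_up m hm (fun n => ∫ t in (s n)..(τ n), a t) (fun n => by
    simp only [H.ps, H.pt]; exact int_shift (fun t => haper t) _ _)
  set A := max A0 1 with hAdef
  have hA : 0 < A := lt_of_lt_of_le one_pos (le_max_right _ _)
  have hss : ∀ n, s n < s (n+1) := fun n => by linarith [H.se n, H.et n, H.ts n]
  have hsT : ∀ n, τ n - s n ≤ T := fun n => by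
    have h1 : s (n+1) ≤ s (n + m) := (strictMono_nat_of_lt_succ hss).monotone (by omega)
    rw [H.ps] at h1
    linarith [H.ts n]
  have hlT : l ≤ T := by
    have h1 := hl' 0
    linarith [hsT 0, H.se 0]
  have hδT : δ ≤ T := by linarith [(hδκ 0).1, hsT 0, H.se 0]
  set K1 := 2 * T / (κ * δ ^ 2) + 1 with hK1def
  have hK10 : 0 ≤ K1 := by positivity
  have hKK : 2 * T < K1 * κ * δ ^ 2 := by
    have : K1 * κ * δ ^ 2 = 2 * T + κ * δ ^ 2 := by
      rw [hK1def]; field_simp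
    rw [this]
    have : 0 < κ * δ ^ 2 := by positivity
    linarith
  obtain ⟨s1, hs1⟩ := eventually_atTop.1 (hgsup.eventually (eventually_ge_atTop K1))
  set s0 := max s1 1 with hs0def
  have hs0 : 0 < s0 := lt_of_lt_of_le one_pos (le_max_right _ _)
  have hgK : ∀ v, s0 ≤ v → K1 * v ≤ g v := fun v hv => by
    have h1 := hs1 v ((le_max_left _ _).trans hv)
    rwa [le_div_iff₀ (hs0.trans_le hv)] at h1
  set R := s0 * T / δ with hRdef
  have hR : 0 < R := by positivity
  have hR0 : s0 * T ≤ δ * R := by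
    rw [hRdef]; apply le_of_eq; field_simp
  have hs0R : s0 ≤ R := by
    rw [hRdef, le_div_iff₀ hδ]; exact mul_le_mul_of_nonneg_left hδT hs0.le
  obtain ⟨h, K, hK, hh, hn, hnn, hgh, hK1, hγ⟩ :=
    trunc g hgC1 hg0 hgpos R K1 s0 hR hK10 hs0.le hs0R hgK
  set η := 1 / (4 * A * T) with hηdef
  have hη0 : 0 < η := by positivity
  have hη : η * (4 * A * T) ≤ 1 := by
    rw [hηdef]; apply le_of_eq; field_simp
  obtain ⟨d, hd, hsmall⟩ := small_g g hgC1 hg0 hg'0 η hη0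
  have hsm : ∀ v, 0 ≤ v → v ≤ min d R → h v ≤ η * v := fun v h1 h2 => by
    rw [hgh v h1 (h2.trans (min_le_right _ _))]
    exact hsmall v h1 (h2.trans (min_le_left _ _))
  have hdR : 0 < min d R := lt_min hd hR
  set Y := min (min d R / (2 * T)) (R / T) with hYdef
  have hY : 0 < Y := lt_min (by positivity) (by positivity)
  have hYδ : 2 * T * Y ≤ min d R := by
    have : Y ≤ min d R / (2 * T) := min_le_left _ _
    rw [le_div_iff₀ (by positivity)] at this
    linarith
  have hYR : Y * T ≤ R := by
    have : Y ≤ R / T := min_le_right _ _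
    rwa [le_div_iff₀ hT] at this
  set Y2 := K * R * A + R / l + Y with hY2def
  have hY2 : 0 < Y2 := by positivity
  obtain ⟨γ, hγ0, hγ⟩ := hγ (Y * l ^ 2 / (32 * T)) (by positivity)
  set w0 := Y * l / 16 / 2 / Y2 with hw0
  have hw00 : 0 < w0 := by positivity
  let c : ℕ → ℝ := fun n => max (τ n) (s (n+1) - w0)
  have hc : ∀ n, τ n ≤ c n := fun n => le_max_left _ _
  have hc'' : ∀ n, c n < s (n+1) := fun n => max_lt (H.ts n) (by linarith)
  have hcε : ∀ n, Y2 * (s (n+1) - c n) ≤ Y * l / 16 / 2 := fun n => by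
    have h1 : s (n+1) - w0 ≤ c n := le_max_right _ _
    have h2 : s (n+1) - c n ≤ w0 := by linarith
    rw [hw0, le_div_iff₀ hY2] at h2
    linarith
  obtain ⟨D, hD, hD'⟩ := unif m hm (fun n => ∫ t in (c n)..(s (n+1)), -a t)
    (fun n => H.im n (c n) (hc n) (hc'' n)) (fun n => by
      have h1 : n + m + 1 = (n + 1) + m := by ring
      have h2 : c (n + m) = c n + T := by
        simp only [c]
        rw [h1, H.ps, H.pt, ← max_add_add_right]
        congr 1; ring
      simp only [h2, h1, H.ps]
      exact int_shift (a := fun t => -a t) (fun t => by rw [haper t]) _ _)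
  set C := Y2 + (Y + K * (Y * l / 16 + Y2 * T) * A) with hC
  have hC0 : 0 < C := by positivity
  have hrR : Y * l / 4 < R := by nlinarith
  refine ⟨Y * l / 4, R, C / (γ * D), by positivity, hrR, by positivity, ?_⟩
  intro μ hμ k hk S hS
  have hμ0 : 0 < μ := lt_trans (by positivity) hμ
  set b : ℝ → ℝ := fun t => max (a t) 0 - μ * max (-a t) 0 with hb
  have hbi : ∀ p q, IntervalIntegrable b volume p q := fun p q => by
    have h1 : IntervalIntegrable (fun t => max (a t) 0) volume p q :=
      ⟨Integrable.pos_part (hai p q).1, Integrable.pos_part (hai p q).2⟩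
    have h2 : IntervalIntegrable (fun t => max (-a t) 0) volume p q :=
      ⟨Integrable.neg_part (hai p q).1, Integrable.neg_part (hai p q).2⟩
    exact h1.sub (h2.const_mul μ)
  have hbp : ∀ t, 0 ≤ a t → b t = a t := fun t ht => by
    simp only [hb]; rw [max_eq_left ht, max_eq_right (by linarith)]; ring
  have hbn : ∀ t, a t ≤ 0 → b t = μ * a t := fun t ht => by
    simp only [hb]; rw [max_eq_right ht, max_eq_left (by linarith)]; ring
  have E : Env b h K := ⟨hbi, hK, hh, hn, hnn⟩
  have hbper : Function.Periodic b T := fun t => by simp only [hb, haper t]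
  have hHump : ∀ n, Hump b T A l δ κ (s n) (e n) (τ n) (s (n+1)) := fun n =>
    { hT := hT, hA := hA, hl := hl, hδ := hδ, hse := H.se n, hsT := hsT n, hle := hl' n
      hτ := H.ts n
      bpos := by
        filter_upwards [H.pos n] with t ht h1
        rw [hbp t (ht h1)]; exact ht h1
      bneg := by
        filter_upwards [H.neg n] with t ht h1
        rw [hbn t (ht h1)]; exact mul_nonpos_of_nonneg_of_nonpos hμ0.le (ht h1)
      bA := by
        rw [int_congr' (by linarith [H.se n, H.et n]) (g := a) (by
          filter_upwards [H.pos n] with t ht h1 using hbp t (ht h1))]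
        exact (hA0 n).trans (le_max_left _ _)
      hδδ := (hδκ n).1
      hκ := by
        rw [int_congr' (hδκ n).1 (g := a) (by
          filter_upwards [ae_sub (H.pos n) (show s n ≤ e n + δ by linarith [H.se n])
            (show τ n - δ ≤ τ n by linarith)] with t ht h1 using hbp t (ht h1))]
        exact (hδκ n).2 }
  obtain ⟨u, w, hsol, hupos, huper, huR, hS0⟩ := assemble E hbper m hm s e τ c hHump
    (fun n => by
      filter_upwards [H.zer n] with t ht h1
      rw [hbn t (ht h1).le, ht h1, mul_zero]) H.ps hη hη0.le hsm hK1 hK10 hR hR0 hKK hY hYδ hYR hlT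
    (le_refl Y2) hc (fun n => (hc'' n).le) hcε hγ0 hγ (fun n => by
      have h1 : ∫ t in (c n)..(s (n+1)), -b t = ∫ t in (c n)..(s (n+1)), μ * -a t := by
        refine int_congr' (hc'' n).le ?_
        filter_upwards [ae_sub (H.neg n) (hc n) le_rfl] with t ht h1
        rw [hbn t (ht h1)]; ring
      rw [h1, intervalIntegral.integral_const_mul]
      have h2 := hD' n
      rw [div_lt_iff₀ (by positivity)] at hμ
      have h3 : μ * (γ * D) ≤ μ * (γ * ∫ t in (c n)..(s (n+1)), -a t) := by gcongr
      calc C < μ * (γ * D) := hμ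
        _ ≤ _ := h3
        _ = _ := by ring) k hk S hS
  have heq : ∀ t, b t * h (u t) = b t * g (u t) := fun t => by
    rw [hgh _ (hupos t).le (huR t).le]
  refine ⟨u, ⟨w, hsol.der, ?_, ?_⟩, hupos, huper, ?_⟩
  · refine loc_of_ii fun p q => ?_
    have := E.ii hsol p q
    simp only [heq] at this
    exact this
  · intro t
    have := hsol.eq 0 t
    simp only [heq] at this
    exact this
  · intro i hi ℓ hℓ
    have hlt : i + ℓ * m < k * m := by
      calc i + ℓ * m < m + ℓ * m := by omega
        _ = (ℓ + 1) * m := by ring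
        _ ≤ k * m := Nat.mul_le_mul_right _ hℓ
    obtain ⟨h0, h1⟩ := hS0 _ hlt
    have het := H.et (i + ℓ * m)
    rw [(hidx i hi ℓ).1, (hidx i hi ℓ).2] at h0 h1 het
    have hne : (u '' Icc (σ (2*i) + (ℓ:ℝ) * T) (σ (2*i+1) + (ℓ:ℝ) * T)).Nonempty :=
      (nonempty_Icc.2 het.le).image u
    constructor
    · intro hSf
      refine lt_of_le_of_lt (csSup_le hne (a := Y * l / 8) ?_) ?_
      · rintro _ ⟨t, ht, rfl⟩
        exact h0 hSf t ht
      · have : 0 < Y * l := mul_pos hY hl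
        linarith
    · intro hSt
      constructor
      · obtain ⟨t, ht, hrt⟩ := h1 hSt
        refine hrt.trans_le (le_csSup ⟨R, ?_⟩ ⟨t, ht, rfl⟩)
        rintro _ ⟨t, _, rfl⟩
        exact (huR t).le
      · obtain ⟨t, _, ht⟩ := (isCompact_Icc.image hsol.cu).sSup_mem hne
        rw [← ht]; exact huR t

end ODE

/-- Theorem 4.1: for `μ` large, for every `k ≥ 2` and every non-null
`km`-tuple of `0/1` symbols there is a positive `kT`-periodic solution of
`u'' + (a⁺ - μ a⁻) g(u) = 0` whose maximum on the positive hump `J⁺_{i,ℓ} = I⁺_i + ℓT`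
is small (`< r`) or large (in `(r,R)`) according to the prescribed symbol; in particular
there are at least `2^{km} - 1` distinct positive `kT`-periodic solutions.
Here `I⁺_i = [σ(2i), σ(2i+1)]` (`0`-indexed) and the symbol attached to `(i,ℓ)` is
`S (i + ℓ m)`. -/
theorem stmt6 (T : ℝ) (hT : 0 < T) (a : ℝ → ℝ)
    (haper : Function.Periodic a T)
    (haloc : MeasureTheory.LocallyIntegrable a MeasureTheory.volume)
    (m : ℕ) (hm : 1 ≤ m) (σ : ℕ → ℝ)
    (hσ0 : σ 0 = 0) (hσT : σ (2*m) = T) (hσmono : ∀ i < 2*m, σ i < σ (i+1))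
    (hapos : ∀ i < m, PosOn a (Set.Icc (σ (2*i)) (σ (2*i+1))))
    (haneg : ∀ i < m, PosOn (fun t => - a t) (Set.Icc (σ (2*i+1)) (σ (2*i+2))))
    (g : ℝ → ℝ) (hgC1 : ContDiffOn ℝ 1 g (Set.Ici 0))
    (hg0 : g 0 = 0) (hgpos : ∀ s : ℝ, 0 < s → 0 < g s)
    (hg'0 : derivWithin g (Set.Ici 0) 0 = 0)
    (hgsup : Filter.Tendsto (fun s => g s / s) Filter.atTop Filter.atTop) :
    ∃ r R μstar : ℝ, 0 < r ∧ r < R ∧ 0 < μstar ∧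
      ∀ μ : ℝ, μstar < μ → ∀ k : ℕ, 2 ≤ k →
        (∀ S : ℕ → Bool, (∃ j < k * m, S j = true) →
          ∃ u : ℝ → ℝ,
            IsSol (fun t s => (max (a t) 0 - μ * max (-a t) 0) * g s) u ∧
            (∀ t, 0 < u t) ∧ Function.Periodic u ((k:ℝ) * T) ∧
            ∀ i < m, ∀ ℓ < k,
              (S (i + ℓ * m) = false →
                sSup (u '' Set.Icc (σ (2*i) + (ℓ:ℝ) * T) (σ (2*i+1) + (ℓ:ℝ) * T)) < r) ∧
              (S (i + ℓ * m) = true →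
                r < sSup (u '' Set.Icc (σ (2*i) + (ℓ:ℝ) * T) (σ (2*i+1) + (ℓ:ℝ) * T)) ∧
                sSup (u '' Set.Icc (σ (2*i) + (ℓ:ℝ) * T) (σ (2*i+1) + (ℓ:ℝ) * T)) < R)) ∧
        ∃ U : Finset (ℝ → ℝ), 2 ^ (k * m) - 1 ≤ U.card ∧
          ∀ u ∈ U,
            IsSol (fun t s => (max (a t) 0 - μ * max (-a t) 0) * g s) u ∧
            (∀ t, 0 < u t) ∧ Function.Periodic u ((k:ℝ) * T) := by
  obtain ⟨r, R, μs, hr, hrR, hμs, hcore⟩ := ODE.core T hT a haper haloc m hm σ hσ0 hσT hσmono hapos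
    haneg g hgC1 hg0 hgpos hg'0 hgsup
  refine ⟨r, R, μs, hr, hrR, hμs, fun μ hμ k hk => ⟨hcore μ hμ k (by omega), ?_⟩⟩
  have hc := hcore μ hμ k (by omega)
  classical
  let ext : (Fin (k * m) → Bool) → ℕ → Bool := fun S j => if hj : j < k * m then S ⟨j, hj⟩ else false
  have hex : ∀ S : Fin (k * m) → Bool, S ≠ (fun _ => false) → ∃ j < k * m, ext S j = true := by
    intro S hS
    obtain ⟨j, hj⟩ := Function.ne_iff.1 hS
    refine ⟨j, j.2, ?_⟩
    simp only [ext, j.2, dif_pos]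
    simpa using hj
  have hch : ∀ S : Fin (k * m) → Bool, ∃ u : ℝ → ℝ, S ≠ (fun _ => false) →
      IsSol (fun t s => (max (a t) 0 - μ * max (-a t) 0) * g s) u ∧
            (∀ t, 0 < u t) ∧ Function.Periodic u ((k:ℝ) * T) ∧
            ∀ i < m, ∀ ℓ < k,
              (ext S (i + ℓ * m) = false →
                sSup (u '' Set.Icc (σ (2*i) + (ℓ:ℝ) * T) (σ (2*i+1) + (ℓ:ℝ) * T)) < r) ∧
              (ext S (i + ℓ * m) = true →
                r < sSup (u '' Set.Icc (σ (2*i) + (ℓ:ℝ) * T) (σ (2*i+1) + (ℓ:ℝ) * T)) ∧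
                sSup (u '' Set.Icc (σ (2*i) + (ℓ:ℝ) * T) (σ (2*i+1) + (ℓ:ℝ) * T)) < R) := by
    intro S
    by_cases hS : S = fun _ => false
    · exact ⟨0, fun h => absurd hS h⟩
    · obtain ⟨u, hu⟩ := hc (ext S) (hex S hS)
      exact ⟨u, fun _ => hu⟩
  choose uS huS using hch
  refine ⟨(Finset.univ.erase (fun _ => false)).image uS, ?_, ?_⟩
  · rw [Finset.card_image_of_injOn, Finset.card_erase_of_mem (Finset.mem_univ _), Finset.card_univ,
      Fintype.card_fun, Fintype.card_fin, Fintype.card_bool]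
    intro S1 h1 S2 h2 heq
    have n1 := (huS S1 (Finset.ne_of_mem_erase h1)).2.2.2
    have n2 := (huS S2 (Finset.ne_of_mem_erase h2)).2.2.2
    rw [heq] at n1
    funext j
    have hj : (j : ℕ) % m + (j : ℕ) / m * m = j := Nat.mod_add_div' _ _
    have q1 := n1 (j % m) (Nat.mod_lt _ hm) (j / m) (Nat.div_lt_of_lt_mul (j.2.trans_eq (mul_comm k m)))
    have q2 := n2 (j % m) (Nat.mod_lt _ hm) (j / m) (Nat.div_lt_of_lt_mul (j.2.trans_eq (mul_comm k m)))
    rw [hj] at q1 q2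
    have e1 : ∀ S, ext S j = S j := fun S => by simp [ext]
    rw [e1] at q1 q2
    cases hb1 : S1 j <;> cases hb2 : S2 j
    · rfl
    · exact absurd (q1.1 hb1) (not_lt.2 (q2.2 hb2).1.le)
    · exact absurd (q2.1 hb2) (not_lt.2 (q1.2 hb1).1.le)
    · rfl
  · intro u hu
    obtain ⟨S, hS, rfl⟩ := Finset.mem_image.1 hu
    have := huS S (Finset.ne_of_mem_erase hS)
    exact ⟨this.1, this.2.1, this.2.2.1⟩
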